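/- arXiv:1905.07983 — 2 statements merged into one kernel-verified Lean document; each statement's English description precedes it below -/
import Mathlib

section
/- Let N ≥ 1, a ≥ 0, b > 0, κ > 0, and set α = a+b−1 and β = b−1. Then ∫_A Π_{1≤i<j≤N}(x_j−x_i)^κ · Π_{i=1}^N (1−x_i)^{κ(a+b)/2 − 1/2}(1+x_i)^{κb/2 − 1/2} dx = (2^{κN(N+α+β+1)/2}/N!) · Π_{j=1}^N [Γ(1+jκ/2)/Γ(1+κ/2)] · [Γ(κ(β+j)/2 + 1/2)·Γ(κ(α+j)/2 + 1/2)/Γ(κ(N+α+β+j)/2 + 1)], where the integral is over the alcove A = {x ∈ ℝ^N : −1 ≤ x_1 ≤ ... ≤ x_N ≤ 1} and Γ denotes the Gamma function. -/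
open MeasureTheory Filter Real Finset Topology

/-- Lebesgue measure on the unit interval. -/
noncomputable def selNu : Measure ℝ := volume.restrict (Set.Ioo 0 1)

instance selNu_finite : IsFiniteMeasure selNu := by
  unfold selNu
  infer_instance

/-- Lebesgue measure on the unit cube. -/
noncomputable def selP (n : ℕ) : Measure (Fin n → ℝ) := Measure.pi (fun _ => selNu)

instance selP_finite (n : ℕ) : IsFiniteMeasure (selP n) := by
  unfold selP
  infer_instance

lemma selP_ae (n : ℕ) : ∀ᵐ x ∂(selP n), ∀ i, x i ∈ Set.Ioo (0:ℝ) 1 := by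
  rw [ae_all_iff]
  intro i
  have h : ∀ᵐ t ∂selNu, t ∈ Set.Ioo (0:ℝ) 1 := ae_restrict_mem measurableSet_Ioo
  exact (Measure.quasiMeasurePreserving_eval (fun _ : Fin n => selNu) i).ae h

lemma sel_prod_ae (m : ℕ) : ∀ᵐ z ∂(selNu.prod (selP m)),
    z.1 ∈ Set.Ioo (0:ℝ) 1 ∧ ∀ i, z.2 i ∈ Set.Ioo (0:ℝ) 1 := by
  have h : ∀ᵐ t ∂selNu, t ∈ Set.Ioo (0:ℝ) 1 := ae_restrict_mem measurableSet_Ioo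
  have h1 := (Measure.quasiMeasurePreserving_fst (μ := selNu) (ν := selP m)).ae h
  have h2 := (Measure.quasiMeasurePreserving_snd (μ := selNu) (ν := selP m)).ae (selP_ae m)
  filter_upwards [h1, h2] with z a b using ⟨a, b⟩

lemma sel_beta_int {r s : ℝ} (hr : 0 < r) (hs : 0 < s) :
    Integrable (fun t : ℝ => t ^ (r - 1) * (1 - t) ^ (s - 1)) selNu := by
  have h := Complex.betaIntegral_convergent (u := (r:ℂ)) (v := (s:ℂ)) (by simpa) (by simpa)
  rw [intervalIntegrable_iff_integrableOn_Ioo_of_le zero_le_one] at h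
  have h2 := h.norm
  unfold selNu
  refine h2.congr ?_
  filter_upwards [ae_restrict_mem measurableSet_Ioo] with t ht
  have e1 : (t:ℂ) ^ ((r:ℂ) - 1) = ((t ^ (r-1) : ℝ) : ℂ) := by
    rw [Complex.ofReal_cpow ht.1.le]; push_cast; rfl
  have e2 : (1 - (t:ℂ)) ^ ((s:ℂ) - 1) = (((1 - t) ^ (s-1) : ℝ) : ℂ) := by
    rw [Complex.ofReal_cpow (by linarith [ht.2])]; push_cast; rfl
  rw [e1, e2, norm_mul, Complex.norm_real, Complex.norm_real,
    Real.norm_of_nonneg (rpow_nonneg ht.1.le _),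
    Real.norm_of_nonneg (rpow_nonneg (by linarith [ht.2]) _)]

lemma sel_hasDeriv_prod {m : ℕ} (κ : ℝ) (y : Fin m → ℝ) (t : ℝ) (ht : ∀ j, t ≠ y j)
    (s : Finset (Fin m)) :
    HasDerivAt (fun t => ∏ j ∈ s, |t - y j| ^ κ)
      ((∑ j ∈ s, κ * (t - y j)⁻¹) * ∏ j ∈ s, |t - y j| ^ κ) t := by
  classical
  induction s using Finset.induction_on with
  | empty => simpa using hasDerivAt_const t (1:ℝ)
  | insert j s hj ih =>
    have h0 : t - y j ≠ 0 := sub_ne_zero.2 (ht j)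
    have h1 : HasDerivAt (fun t => |t - y j| ^ κ) (κ * (t - y j)⁻¹ * |t - y j| ^ κ) t := by
      have := (((hasDerivAt_abs h0).comp t ((hasDerivAt_id t).sub_const (y j)))).rpow_const
        (p := κ) (Or.inl (by simpa using h0))
      refine this.congr_deriv ?_
      change (SignType.sign (t - y j) : ℝ) * 1 * κ * |t - y j| ^ (κ - 1) = _
      rw [rpow_sub_one (abs_ne_zero.2 h0)]
      rcases lt_or_gt_of_ne h0 with h | h
      · rw [abs_of_neg h, sign_neg h]; field_simp; simp
      · rw [abs_of_pos h, sign_pos h]; field_simp; simp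
    have := h1.mul ih
    simp only [Finset.prod_insert hj, Finset.sum_insert hj]
    refine this.congr_deriv ?_
    ring

/-- One dimensional fundamental theorem of calculus. -/
lemma sel_ftc {m : ℕ} {p q κ : ℝ} (hp : 0 < p) (hq : 0 ≤ q) (hκ : 0 < κ) (y : Fin m → ℝ)
    (hi : Integrable (fun t : ℝ => (p * (t ^ (p-1) * (1-t) ^ q) - q * (t ^ p * (1-t) ^ (q-1))
      + ∑ j, κ * (t^p * (1-t)^q * (t - y j)⁻¹)) * ∏ j, |t - y j| ^ κ) selNu) :
    ∫ t, (p * (t ^ (p-1) * (1-t) ^ q) - q * (t ^ p * (1-t) ^ (q-1))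
      + ∑ j, κ * (t^p * (1-t)^q * (t - y j)⁻¹)) * ∏ j, |t - y j| ^ κ ∂selNu
      = (0:ℝ) ^ q * ∏ j, |1 - y j| ^ κ := by
  unfold selNu at *
  rw [← integral_Ioc_eq_integral_Ioo, ← intervalIntegral.integral_of_le zero_le_one]
  have := integral_eq_of_hasDerivAt_off_countable_of_le
    (fun t : ℝ => t ^ p * (1-t)^q * ∏ j, |t - y j| ^ κ)
    (fun t : ℝ => (p * (t ^ (p-1) * (1-t) ^ q) - q * (t ^ p * (1-t) ^ (q-1))
      + ∑ j, κ * (t^p * (1-t)^q * (t - y j)⁻¹)) * ∏ j, |t - y j| ^ κ) (a := 0) (b := 1)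
    zero_le_one (s := Set.range y) (Set.countable_range y) ?_ ?_ ?_
  · rw [this]
    simp [Real.zero_rpow hp.ne']
  · apply Continuous.continuousOn
    refine ((continuous_id.rpow_const fun _ => Or.inr hp.le).mul
      ((continuous_const.sub continuous_id).rpow_const fun _ => Or.inr hq)).mul
      (continuous_finsetProd _ fun j _ => ?_)
    exact ((continuous_id.sub continuous_const).abs).rpow_const fun _ => Or.inr hκ.le
  · rintro t ⟨ht, hts⟩
    have hty : ∀ j, t ≠ y j := fun j h => hts ⟨j, h.symm⟩
    have h3 := sel_hasDeriv_prod κ y t hty Finset.univ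
    have h1 := (hasDerivAt_id t).rpow_const (p := p) (Or.inl ht.1.ne')
    have h2 := ((hasDerivAt_id t).const_sub 1).rpow_const (p := q)
      (Or.inl (sub_ne_zero.2 ht.2.ne'))
    refine ((h1.mul h2).mul h3).congr_deriv ?_
    simp only [id]
    rw [show ((fun y : ℝ => y ^ p) * fun y : ℝ => (1 - y) ^ q) t = t ^ p * (1 - t) ^ q from rfl]
    have : ∑ j, κ * (t^p * (1-t)^q * (t - y j)⁻¹) = t^p * (1-t)^q * ∑ j, κ * (t - y j)⁻¹ := by
      rw [Finset.mul_sum]; exact Finset.sum_congr rfl fun j _ => by ring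
    rw [this]
    ring
  · rw [intervalIntegrable_iff_integrableOn_Ioo_of_le zero_le_one]
    exact hi

lemma sel_prod_le_one {m : ℕ} {κ : ℝ} (hκ : 0 < κ) {t : ℝ} (ht : t ∈ Set.Ioo (0:ℝ) 1)
    {y : Fin m → ℝ} (hy : ∀ i, y i ∈ Set.Ioo (0:ℝ) 1) (s : Finset (Fin m)) :
    |∏ j ∈ s, |t - y j| ^ κ| ≤ 1 := by
  rw [abs_of_nonneg (Finset.prod_nonneg fun j _ => rpow_nonneg (abs_nonneg _) _)]
  refine Finset.prod_le_one (fun j _ => rpow_nonneg (abs_nonneg _) _) fun j _ => ?_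
  refine rpow_le_one (abs_nonneg _) ?_ hκ.le
  rw [abs_le]
  constructor <;> linarith [ht.1, ht.2, (hy j).1, (hy j).2]

lemma sel_int12 {m : ℕ} {r s κ : ℝ} (hr : 0 < r) (hs : 0 < s) (hκ : 0 < κ)
    {W : (Fin m → ℝ) → ℝ} (hW : Integrable W (selP m)) :
    Integrable (fun z : ℝ × (Fin m → ℝ) =>
      z.1 ^ (r-1) * (1 - z.1) ^ (s-1) * (∏ j, |z.1 - z.2 j| ^ κ) * W z.2)
      (selNu.prod (selP m)) := by
  have h := (sel_beta_int hr hs).mul_prod hW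
  refine h.norm.mono' ?_ ?_
  · have hm : Measurable (fun z : ℝ × (Fin m → ℝ) =>
      z.1 ^ (r-1) * (1 - z.1) ^ (s-1) * (∏ j, |z.1 - z.2 j| ^ κ)) := by
      have : Measurable (fun z : ℝ × (Fin m → ℝ) => ∏ j, |z.1 - z.2 j| ^ κ) :=
        Finset.measurable_fun_prod _ fun j _ => by fun_prop
      fun_prop
    exact hm.aestronglyMeasurable.mul hW.1.comp_snd
  · filter_upwards [sel_prod_ae m] with z hz
    have := sel_prod_le_one hκ hz.1 hz.2 Finset.univ
    simp only [norm_mul, Real.norm_eq_abs] at *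
    have h4 : |z.1 ^ (r-1)| * |(1 - z.1) ^ (s-1)| * |∏ j, |z.1 - z.2 j| ^ κ| * |W z.2|
      ≤ |z.1 ^ (r-1)| * |(1 - z.1) ^ (s-1)| * 1 * |W z.2| := by gcongr
    simpa using h4

lemma sel_abs_int {κ : ℝ} (hκ : 0 < κ) :
    IntegrableOn (fun s : ℝ => |s| ^ (κ - 1)) (Set.Ioo (-1) 1) := by
  have h0 : IntegrableOn (fun s : ℝ => s ^ (κ - 1)) (Set.Ioo 0 1) := by
    have := intervalIntegral.intervalIntegrable_rpow' (a := 0) (b := 1) (r := κ - 1) (by linarith)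
    rwa [intervalIntegrable_iff_integrableOn_Ioo_of_le zero_le_one] at this
  have h1 : IntegrableOn (fun s : ℝ => |s| ^ (κ - 1)) (Set.Ioo 0 1) := by
    refine h0.congr_fun (fun s hs => ?_) measurableSet_Ioo
    simp only [abs_of_pos hs.1]
  have h2 : IntegrableOn (fun s : ℝ => |s| ^ (κ - 1)) (Set.Ioo (-1) 0) := by
    have := (MeasurePreserving.integrableOn_comp_preimage
      (Measure.measurePreserving_neg (volume : Measure ℝ))
      (Homeomorph.neg ℝ).measurableEmbedding (s := Set.Ioo 0 1)).2 h1
    simpa [Function.comp_def] using this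
  have h3 : IntegrableOn (fun s : ℝ => |s| ^ (κ - 1)) {0} := by
    rw [integrableOn_singleton_iff]; simp
  refine ((h2.union h1).union h3).mono_set ?_
  intro x hx
  rcases lt_trichotomy x 0 with h | h | h
  · exact Or.inl (Or.inl ⟨hx.1, h⟩)
  · exact Or.inr h
  · exact Or.inl (Or.inr ⟨h, hx.2⟩)

lemma sel_int3 {m : ℕ} {p q κ : ℝ} (hp : 0 < p) (hq : 0 ≤ q) (hκ : 0 < κ)
    {W : (Fin m → ℝ) → ℝ} (hW : Integrable W (selP m)) (j : Fin m) :
    Integrable (fun z : ℝ × (Fin m → ℝ) =>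
      z.1 ^ p * (1 - z.1) ^ q * (z.1 - z.2 j)⁻¹ * (∏ j, |z.1 - z.2 j| ^ κ) * W z.2)
      (selNu.prod (selP m)) := by
  have hbase : Integrable (fun z : ℝ × (Fin m → ℝ) =>
      (Set.Ioo (-1:ℝ) 1).indicator (fun s : ℝ => |s| ^ (κ - 1)) z.1 * W z.2)
      ((volume : Measure ℝ).prod (selP m)) := by
    refine Integrable.mul_prod ?_ hW
    rw [integrable_indicator_iff measurableSet_Ioo]
    exact sel_abs_int hκ
  have hmp : MeasurePreserving (fun z : ℝ × (Fin m → ℝ) => (z.1 - z.2 j, z.2))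
      ((volume : Measure ℝ).prod (selP m)) ((volume : Measure ℝ).prod (selP m)) := by
    have h1 : MeasurePreserving (fun z : (Fin m → ℝ) × ℝ => (z.1, z.2 - z.1 j))
        ((selP m).prod (volume : Measure ℝ)) ((selP m).prod (volume : Measure ℝ)) := by
      refine MeasurePreserving.skew_product (MeasurePreserving.id _)
        (g := fun (y : Fin m → ℝ) (s : ℝ) => s - y j) (by fun_prop) ?_
      refine Filter.Eventually.of_forall fun y => ?_
      exact (measurePreserving_sub_right (volume : Measure ℝ) (y j)).map_eq
    have hs1 := Measure.measurePreserving_swap (μ := (volume : Measure ℝ)) (ν := selP m)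
    have hs2 := Measure.measurePreserving_swap (μ := selP m) (ν := (volume : Measure ℝ))
    exact hs2.comp (h1.comp hs1)
  have h2 := hmp.integrable_comp_of_integrable hbase
  have h3 : Integrable (fun z : ℝ × (Fin m → ℝ) =>
      (Set.Ioo (-1:ℝ) 1).indicator (fun s : ℝ => |s| ^ (κ - 1)) (z.1 - z.2 j) * W z.2)
      (selNu.prod (selP m)) := by
    have hle : selNu.prod (selP m) ≤ (volume : Measure ℝ).prod (selP m) :=
by
      have := Measure.prod_restrict (μ := (volume : Measure ℝ)) (ν := selP m) (Set.Ioo 0 1) Set.univ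
      rw [Measure.restrict_univ] at this
      unfold selNu
      rw [this]
      exact Measure.restrict_le_self
    exact h2.mono_measure hle
  refine h3.norm.mono' ?_ ?_
  · have hm : Measurable (fun z : ℝ × (Fin m → ℝ) =>
      z.1 ^ p * (1 - z.1) ^ q * (z.1 - z.2 j)⁻¹ * (∏ j, |z.1 - z.2 j| ^ κ)) := by
      have : Measurable (fun z : ℝ × (Fin m → ℝ) => ∏ j, |z.1 - z.2 j| ^ κ) :=
        Finset.measurable_fun_prod _ fun j _ => by fun_prop
      fun_prop
    exact hm.aestronglyMeasurable.mul hW.1.comp_snd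
  · filter_upwards [sel_prod_ae m] with z hz
    classical
    have h5 := sel_prod_le_one hκ hz.1 hz.2 (Finset.univ.erase j)
    have hmem : z.1 - z.2 j ∈ Set.Ioo (-1:ℝ) 1 :=
      ⟨by linarith [hz.1.1, (hz.2 j).2], by linarith [hz.1.2, (hz.2 j).1]⟩
    rw [Set.indicator_of_mem hmem, ← Finset.mul_prod_erase _ _ (Finset.mem_univ j)]
    simp only [norm_mul, Real.norm_eq_abs]
    have e1 : |z.1 ^ p| ≤ 1 := by
      rw [abs_of_nonneg (rpow_nonneg hz.1.1.le _)]
      exact rpow_le_one hz.1.1.le hz.1.2.le hp.le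
    have e2 : |(1 - z.1) ^ q| ≤ 1 := by
      rw [abs_of_nonneg (rpow_nonneg (by linarith [hz.1.2]) _)]
      exact rpow_le_one (by linarith [hz.1.2]) (by linarith [hz.1.1]) hq
    have e3 : |(z.1 - z.2 j)⁻¹| * |(|z.1 - z.2 j| ^ κ)| ≤ |(|z.1 - z.2 j| ^ (κ - 1))| := by
      rcases eq_or_ne (z.1 - z.2 j) 0 with h | h
      · rw [h]; simp
      · rw [rpow_sub_one (abs_ne_zero.2 h), abs_div, abs_abs, abs_inv, div_eq_inv_mul]
    calc |z.1 ^ p| * |(1 - z.1) ^ q| * |(z.1 - z.2 j)⁻¹| *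
          (|(|z.1 - z.2 j| ^ κ)| * |∏ x ∈ Finset.univ.erase j, |z.1 - z.2 x| ^ κ|) * |W z.2|
        = |z.1 ^ p| * |(1 - z.1) ^ q| * (|(z.1 - z.2 j)⁻¹| * |(|z.1 - z.2 j| ^ κ)|) *
          |∏ x ∈ Finset.univ.erase j, |z.1 - z.2 x| ^ κ| * |W z.2| := by ring
      _ ≤ 1 * 1 * |(|z.1 - z.2 j| ^ (κ - 1))| * 1 * |W z.2| := by gcongr
      _ = _ := by ring

/-- Integration by parts in the split coordinates. -/
lemma sel_ibp {m : ℕ} {p q κ : ℝ} (hp : 0 < p) (hq : 0 ≤ q) (hκ : 0 < κ)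
    {W : (Fin m → ℝ) → ℝ} (hW : Integrable W (selP m)) :
    p * (∫ z : ℝ × (Fin m → ℝ), z.1 ^ (p-1) * (1 - z.1) ^ q * (∏ j, |z.1 - z.2 j| ^ κ) * W z.2
      ∂(selNu.prod (selP m)))
    - q * (∫ z : ℝ × (Fin m → ℝ), z.1 ^ p * (1 - z.1) ^ (q-1) * (∏ j, |z.1 - z.2 j| ^ κ) * W z.2
      ∂(selNu.prod (selP m)))
    + ∑ j, κ * (∫ z : ℝ × (Fin m → ℝ),
      z.1 ^ p * (1 - z.1) ^ q * (z.1 - z.2 j)⁻¹ * (∏ j, |z.1 - z.2 j| ^ κ) * W z.2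
      ∂(selNu.prod (selP m)))
    = ∫ y, (0:ℝ) ^ q * (∏ j, |1 - y j| ^ κ) * W y ∂(selP m) := by
  have i1 : Integrable (fun z : ℝ × (Fin m → ℝ) =>
      p * (z.1 ^ (p-1) * (1 - z.1) ^ q * (∏ j, |z.1 - z.2 j| ^ κ) * W z.2))
      (selNu.prod (selP m)) := by
    have := (sel_int12 hp (by linarith : 0 < q + 1) hκ hW).const_mul p
    simpa using this
  have i2 : Integrable (fun z : ℝ × (Fin m → ℝ) =>
      q * (z.1 ^ p * (1 - z.1) ^ (q-1) * (∏ j, |z.1 - z.2 j| ^ κ) * W z.2))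
      (selNu.prod (selP m)) := by
    rcases hq.eq_or_lt with h | h
    · subst h; simp
    · have := (sel_int12 (by linarith : 0 < p + 1) h hκ hW).const_mul q
      simpa using this
  have i3 : ∀ j : Fin m, Integrable (fun z : ℝ × (Fin m → ℝ) =>
      κ * (z.1 ^ p * (1 - z.1) ^ q * (z.1 - z.2 j)⁻¹ * (∏ j, |z.1 - z.2 j| ^ κ) * W z.2))
      (selNu.prod (selP m)) := fun j => (sel_int3 hp hq hκ hW j).const_mul κ
  have i4 := integrable_finsetSum Finset.univ (fun j _ => i3 j)
  simp only [← integral_const_mul]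
  rw [← integral_finsetSum _ (fun j _ => i3 j), ← integral_sub i1 i2,
    ← integral_add (by exact i1.sub i2) i4]
  have i5 := (i1.sub i2).add i4
  refine (integral_prod_symm _ i5).trans ?_
  refine integral_congr_ae ?_
  have i6 := i5.prod_left_ae
  filter_upwards [i6] with y hy
  have e : ∀ t : ℝ, (p * (t ^ (p-1) * (1-t) ^ q * (∏ j, |t - y j| ^ κ) * W y)
      - q * (t ^ p * (1-t) ^ (q-1) * (∏ j, |t - y j| ^ κ) * W y)
      + ∑ j, κ * (t^p * (1-t)^q * (t - y j)⁻¹ * (∏ j, |t - y j| ^ κ) * W y))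
      = ((p * (t ^ (p-1) * (1-t) ^ q) - q * (t ^ p * (1-t) ^ (q-1))
      + ∑ j, κ * (t^p * (1-t)^q * (t - y j)⁻¹)) * ∏ j, |t - y j| ^ κ) * W y := by
    intro t
    have : ∑ j, κ * (t^p * (1-t)^q * (t - y j)⁻¹ * (∏ j, |t - y j| ^ κ) * W y)
      = (∑ j, κ * (t^p * (1-t)^q * (t - y j)⁻¹)) * (∏ j, |t - y j| ^ κ) * W y := by
      rw [Finset.sum_mul, Finset.sum_mul]
      exact Finset.sum_congr rfl fun j _ => by ring
    rw [this]; ring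
  simp only [Pi.add_apply, Pi.sub_apply] at hy ⊢
  simp only [e] at hy ⊢
  rw [integral_mul_const]
  rcases eq_or_ne (W y) 0 with h | h
  · simp [h]
  · rw [sel_ftc hp hq hκ y ((integrable_mul_const_iff (Ne.isUnit h) _).1 hy)]

/-- Symmetric form of the Vandermonde factor. -/
noncomputable def selD (γ : ℝ) {n : ℕ} (x : Fin n → ℝ) : ℝ :=
  ∏ i, ∏ j, if i = j then (1:ℝ) else |x i - x j| ^ γ

/-- The one-body weight. -/
noncomputable def selB (a b : ℝ) {n : ℕ} (x : Fin n → ℝ) : ℝ :=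
  ∏ i, (x i ^ (a - 1) * (1 - x i) ^ (b - 1))

/-- The Selberg weight. -/
noncomputable def selW (γ a b : ℝ) {n : ℕ} (x : Fin n → ℝ) : ℝ := selB a b x * selD γ x

/-- The Selberg integral over the cube. -/
noncomputable def selS (γ a b : ℝ) (n : ℕ) : ℝ := ∫ x, selW γ a b x ∂(selP n)

lemma selD_split {γ : ℝ} (hγ : 0 < γ) {m : ℕ} (i : Fin (m+1)) (t : ℝ) (y : Fin m → ℝ) :
    selD γ (i.insertNth t y : Fin (m+1) → ℝ) = (∏ j, |t - y j| ^ (2*γ)) * selD γ y := by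
  unfold selD
  rw [Fin.prod_univ_succAbove _ i, Fin.prod_univ_succAbove _ i]
  have h : ∀ k : Fin m, (∏ j, if i.succAbove k = j then (1:ℝ) else
      |(i.insertNth t y : Fin (m+1) → ℝ) (i.succAbove k) - (i.insertNth t y : Fin (m+1) → ℝ) j| ^ γ)
      = |t - y k| ^ γ * ∏ j, if k = j then (1:ℝ) else |y k - y j| ^ γ := by
    intro k
    rw [Fin.prod_univ_succAbove _ i]
    simp [Fin.succAbove_ne, abs_sub_comm]
  simp only [h, Finset.prod_mul_distrib]
  simp only [if_true, one_mul, (Fin.succAbove_ne _ _).symm, if_false, Fin.insertNth_apply_same,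
    Fin.insertNth_apply_succAbove]
  rw [← mul_assoc, ← Finset.prod_mul_distrib]
  congr 1
  refine Finset.prod_congr rfl fun j _ => ?_
  rw [← rpow_add_of_nonneg (abs_nonneg _) hγ.le hγ.le]
  ring_nf

lemma selB_split (a b : ℝ) {m : ℕ} (i : Fin (m+1)) (t : ℝ) (y : Fin m → ℝ) :
    selB a b (i.insertNth t y : Fin (m+1) → ℝ) = t ^ (a-1) * (1-t) ^ (b-1) * selB a b y := by
  unfold selB
  rw [Fin.prod_univ_succAbove _ i]
  simp

lemma selD_comp (γ : ℝ) {n : ℕ} (σ : Equiv.Perm (Fin n)) (x : Fin n → ℝ) :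
    selD γ (fun i => x (σ i)) = selD γ x := by
  unfold selD
  rw [← Equiv.prod_comp σ (fun i => ∏ j, if i = j then (1:ℝ) else |x i - x j| ^ γ)]
  refine Finset.prod_congr rfl fun i _ => ?_
  rw [← Equiv.prod_comp σ (fun j => if σ i = j then (1:ℝ) else |x (σ i) - x j| ^ γ)]
  simp

lemma selB_comp (a b : ℝ) {n : ℕ} (σ : Equiv.Perm (Fin n)) (x : Fin n → ℝ) :
    selB a b (fun i => x (σ i)) = selB a b x := by
  unfold selB
  exact Equiv.prod_comp σ (fun i => x i ^ (a - 1) * (1 - x i) ^ (b - 1))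

lemma selW_comp (γ a b : ℝ) {n : ℕ} (σ : Equiv.Perm (Fin n)) (x : Fin n → ℝ) :
    selW γ a b (fun i => x (σ i)) = selW γ a b x := by
  unfold selW
  rw [selD_comp, selB_comp]

lemma selD_nonneg (γ : ℝ) {n : ℕ} (x : Fin n → ℝ) : 0 ≤ selD γ x := by
  unfold selD
  refine Finset.prod_nonneg fun i _ => Finset.prod_nonneg fun j _ => ?_
  split_ifs
  · exact zero_le_one
  · exact rpow_nonneg (abs_nonneg _) _

lemma selD_le_one {γ : ℝ} (hγ : 0 < γ) {n : ℕ} {x : Fin n → ℝ}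
    (hx : ∀ i, x i ∈ Set.Ioo (0:ℝ) 1) : selD γ x ≤ 1 := by
  have h : ∀ i j : Fin n, 0 ≤ (if i = j then (1:ℝ) else |x i - x j| ^ γ) ∧
      (if i = j then (1:ℝ) else |x i - x j| ^ γ) ≤ 1 := by
    intro i j
    split_ifs
    · exact ⟨zero_le_one, le_rfl⟩
    · refine ⟨rpow_nonneg (abs_nonneg _) _, rpow_le_one (abs_nonneg _) ?_ hγ.le⟩
      rw [abs_le]
      constructor <;> linarith [(hx i).1, (hx i).2, (hx j).1, (hx j).2]
  unfold selD
  exact Finset.prod_le_one (fun i _ => Finset.prod_nonneg fun j _ => (h i j).1)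
    fun i _ => Finset.prod_le_one (fun j _ => (h i j).1) fun j _ => (h i j).2

lemma selD_zero {γ : ℝ} (hγ : 0 < γ) {n : ℕ} {x : Fin n → ℝ} {i j : Fin n} (hij : i ≠ j)
    (h : x i = x j) : selD γ x = 0 := by
  unfold selD
  refine Finset.prod_eq_zero (Finset.mem_univ i) (Finset.prod_eq_zero (Finset.mem_univ j) ?_)
  rw [if_neg hij, h]
  simp [hγ.ne']

lemma selB_nonneg (a b : ℝ) {n : ℕ} {x : Fin n → ℝ} (hx : ∀ i, x i ∈ Set.Ioo (0:ℝ) 1) :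
    0 ≤ selB a b x := by
  unfold selB
  refine Finset.prod_nonneg fun i _ => mul_nonneg (rpow_nonneg (hx i).1.le _)
    (rpow_nonneg (by linarith [(hx i).2]) _)

lemma selW_nonneg (γ a b : ℝ) {n : ℕ} {x : Fin n → ℝ} (hx : ∀ i, x i ∈ Set.Ioo (0:ℝ) 1) :
    0 ≤ selW γ a b x := mul_nonneg (selB_nonneg a b hx) (selD_nonneg γ x)

lemma selD_meas (γ : ℝ) (n : ℕ) : Measurable (fun x : Fin n → ℝ => selD γ x) := by
  unfold selD
  refine Finset.measurable_fun_prod _ fun i _ => Finset.measurable_fun_prod _ fun j _ => ?_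
  split_ifs
  · fun_prop
  · fun_prop

lemma selB_meas (a b : ℝ) (n : ℕ) : Measurable (fun x : Fin n → ℝ => selB a b x) := by
  unfold selB
  exact Finset.measurable_fun_prod _ fun i _ => by fun_prop

lemma selW_meas (γ a b : ℝ) (n : ℕ) : Measurable (fun x : Fin n → ℝ => selW γ a b x) :=
  (selB_meas a b n).mul (selD_meas γ n)

lemma selB_int {a b : ℝ} (ha : 0 < a) (hb : 0 < b) (n : ℕ) :
    Integrable (fun x : Fin n → ℝ => selB a b x) (selP n) :=
  Integrable.fintype_prod (fun _ => sel_beta_int ha hb)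

lemma selTW_int {γ a b : ℝ} (hγ : 0 < γ) (ha : 0 < a) (hb : 0 < b) {n : ℕ}
    (T : Finset (Fin n)) :
    Integrable (fun x : Fin n → ℝ => (∏ i ∈ T, x i) * selW γ a b x) (selP n) := by
  refine (selB_int ha hb n).mono' ?_ ?_
  · refine Measurable.aestronglyMeasurable (Measurable.mul ?_ (selW_meas γ a b n))
    exact Finset.measurable_fun_prod _ fun i _ => by fun_prop
  · filter_upwards [selP_ae n] with x hx
    have h1 : 0 ≤ ∏ i ∈ T, x i := Finset.prod_nonneg fun i _ => (hx i).1.le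
    have h2 : ∏ i ∈ T, x i ≤ 1 :=
      Finset.prod_le_one (fun i _ => (hx i).1.le) fun i _ => (hx i).2.le
    have h3 := selB_nonneg a b hx
    have h4 := selD_le_one hγ hx
    have h5 := selD_nonneg γ x
    rw [Real.norm_of_nonneg (mul_nonneg h1 (selW_nonneg γ a b hx))]
    unfold selW
    calc (∏ i ∈ T, x i) * (selB a b x * selD γ x) ≤ 1 * (selB a b x * 1) := by gcongr
      _ = _ := by ring

lemma selW_int {γ a b : ℝ} (hγ : 0 < γ) (ha : 0 < a) (hb : 0 < b) (n : ℕ) :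
    Integrable (fun x : Fin n → ℝ => selW γ a b x) (selP n) := by
  simpa using selTW_int hγ ha hb (∅ : Finset (Fin n))

lemma sel_perm_coe {n : ℕ} (σ : Equiv.Perm (Fin n)) :
    (fun (x : Fin n → ℝ) i => x (σ i)) =
      ⇑(MeasurableEquiv.piCongrLeft (fun _ : Fin n => ℝ) σ.symm) := by
  funext x i
  have := MeasurableEquiv.piCongrLeft_apply_apply (β := fun _ : Fin n => ℝ) σ.symm x (σ i)
  rw [Equiv.symm_apply_apply] at this
  exact this.symm

lemma sel_perm_mp {n : ℕ} (σ : Equiv.Perm (Fin n)) :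
    MeasurePreserving (fun (x : Fin n → ℝ) i => x (σ i)) (selP n) (selP n) := by
  have := measurePreserving_piCongrLeft (fun _ : Fin n => selNu) σ.symm
  rw [sel_perm_coe]
  exact this

lemma sel_perm_int {n : ℕ} (σ : Equiv.Perm (Fin n)) (f : (Fin n → ℝ) → ℝ) :
    ∫ x, f (fun i => x (σ i)) ∂(selP n) = ∫ x, f x ∂(selP n) := by
  have h : MeasurableEmbedding (fun (x : Fin n → ℝ) i => x (σ i)) := by
    rw [sel_perm_coe]
    exact (MeasurableEquiv.piCongrLeft (fun _ : Fin n => ℝ) σ.symm).measurableEmbedding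
  exact (sel_perm_mp σ).integral_comp h f

lemma sel_split_mp {m : ℕ} (i : Fin (m+1)) :
    MeasurePreserving (MeasurableEquiv.piFinSuccAbove (fun _ => ℝ) i).symm
      (selNu.prod (selP m)) (selP (m+1)) :=
  (measurePreserving_piFinSuccAbove (fun _ : Fin (m+1) => selNu) i).symm _

lemma sel_split_int {m : ℕ} (i : Fin (m+1)) (f : (Fin (m+1) → ℝ) → ℝ) :
    ∫ z : ℝ × (Fin m → ℝ), f (i.insertNth z.1 z.2) ∂(selNu.prod (selP m))
      = ∫ x, f x ∂(selP (m+1)) :=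
  (sel_split_mp i).integral_comp (MeasurableEquiv.measurableEmbedding _) f

lemma sel_split_integrable {m : ℕ} (i : Fin (m+1)) (f : (Fin (m+1) → ℝ) → ℝ) :
    Integrable (fun z : ℝ × (Fin m → ℝ) => f (i.insertNth z.1 z.2)) (selNu.prod (selP m))
      ↔ Integrable f (selP (m+1)) :=
  (sel_split_mp i).integrable_comp_emb (MeasurableEquiv.measurableEmbedding _)

lemma sel_symm {n : ℕ} (i j : Fin n) (f g : (Fin n → ℝ) → ℝ) (hf : Integrable f (selP n))
    (h : ∀ x, f x + f (fun k => x (Equiv.swap i j k)) = 2 * g x) :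
    ∫ x, f x ∂(selP n) = ∫ x, g x ∂(selP n) := by
  have h1 := sel_perm_int (Equiv.swap i j) f
  have h2 := (sel_perm_mp (Equiv.swap i j)).integrable_comp_of_integrable hf
  have h3 := integral_add hf h2
  simp only [Function.comp_def] at h3
  rw [h1] at h3
  simp only [h] at h3
  rw [integral_const_mul] at h3
  linarith

lemma sel_T_split {m : ℕ} (i : Fin (m+1)) (T : Finset (Fin (m+1))) (hi : i ∈ T) (t : ℝ)
    (y : Fin m → ℝ) :
    ∏ k ∈ T, (i.insertNth t y : Fin (m+1) → ℝ) k
      = t * ∏ k ∈ Finset.univ.filter (fun k => i.succAbove k ∈ T), y k := by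
  have : ∏ k ∈ T, (i.insertNth t y : Fin (m+1) → ℝ) k
      = ∏ k, if k ∈ T then (i.insertNth t y : Fin (m+1) → ℝ) k else 1 := by
    rw [Finset.prod_ite_mem, Finset.univ_inter]
  rw [this, Fin.prod_univ_succAbove _ i, Finset.prod_filter]
  simp [hi]

lemma sel_Terase_split {m : ℕ} (i : Fin (m+1)) (T : Finset (Fin (m+1))) (t : ℝ)
    (y : Fin m → ℝ) :
    ∏ k ∈ T.erase i, (i.insertNth t y : Fin (m+1) → ℝ) k
      = ∏ k ∈ Finset.univ.filter (fun k => i.succAbove k ∈ T), y k := by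
  have : ∏ k ∈ T.erase i, (i.insertNth t y : Fin (m+1) → ℝ) k
      = ∏ k, if k ∈ T.erase i then (i.insertNth t y : Fin (m+1) → ℝ) k else 1 := by
    rw [Finset.prod_ite_mem, Finset.univ_inter]
  rw [this, Fin.prod_univ_succAbove _ i, Finset.prod_filter]
  simp [Fin.succAbove_ne]

/-- The moments used in the Aomoto argument. -/
noncomputable def selJ (γ a b : ℝ) {n : ℕ} (T : Finset (Fin n)) : ℝ :=
  ∫ x, (∏ k ∈ T, x k) * selW γ a b x ∂(selP n)

lemma sel_rpow_sub_one {t : ℝ} (ht : 0 < t) (p : ℝ) : t ^ p = t * t ^ (p - 1) := by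
  rw [rpow_sub_one ht.ne']; field_simp

/-- Singular integrands in the full coordinates. -/
lemma sel_singular_int {γ a b : ℝ} (hγ : 0 < γ) (ha : 0 < a) (hb : 0 < b) {m : ℕ}
    (i : Fin (m+1)) (T : Finset (Fin (m+1))) (hi : i ∈ T) (j : Fin m) :
    Integrable (fun x : Fin (m+1) → ℝ =>
      (1 - x i) * (x i - x (i.succAbove j))⁻¹ * ((∏ k ∈ T, x k) * selW γ a b x)) (selP (m+1)) := by
  rw [← sel_split_integrable i]
  refine (sel_int3 ha hb.le (by linarith : 0 < 2*γ)
    (selTW_int hγ ha hb (Finset.univ.filter (fun k => i.succAbove k ∈ T))) j).congr ?_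
  filter_upwards [sel_prod_ae m] with z hz
  rw [sel_T_split i T hi, selW, selW, selD_split hγ, selB_split, Fin.insertNth_apply_same,
    Fin.insertNth_apply_succAbove, sel_rpow_sub_one hz.1.1 a,
    sel_rpow_sub_one (sub_pos.2 hz.1.2) b]
  ring

lemma sel_aomoto_raw {γ a b : ℝ} (hγ : 0 < γ) (ha : 0 < a) (hb : 0 < b) {m : ℕ}
    (i : Fin (m+1)) (T : Finset (Fin (m+1))) (hi : i ∈ T) :
    a * (selJ γ a b (T.erase i) - selJ γ a b T) - b * selJ γ a b T
    + ∑ j : Fin m, 2 * γ * (∫ x : Fin (m+1) → ℝ,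
      (1 - x i) * (x i - x (i.succAbove j))⁻¹ * ((∏ k ∈ T, x k) * selW γ a b x) ∂(selP (m+1)))
    = 0 := by
  have key := sel_ibp ha hb.le (by linarith : 0 < 2*γ)
    (selTW_int hγ ha hb (Finset.univ.filter (fun k => i.succAbove k ∈ T)))
  have r : (∫ y : Fin m → ℝ, (0:ℝ) ^ b * (∏ j, |1 - y j| ^ (2*γ)) *
      ((∏ k ∈ Finset.univ.filter (fun k => i.succAbove k ∈ T), y k) * selW γ a b y) ∂(selP m))
      = 0 := by
    simp [Real.zero_rpow hb.ne']
  rw [r] at key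
  rw [← key]
  congr 1
  · congr 1
    · congr 1
      unfold selJ
      rw [← integral_sub (selTW_int hγ ha hb _) (selTW_int hγ ha hb _), ← sel_split_int i]
      refine integral_congr_ae ?_
      filter_upwards [sel_prod_ae m] with z hz
      rw [sel_T_split i T hi, sel_Terase_split i T, selW, selW, selD_split hγ, selB_split,
        sel_rpow_sub_one (sub_pos.2 hz.1.2) b]
      ring
    · congr 1
      unfold selJ
      rw [← sel_split_int i]
      refine integral_congr_ae ?_
      filter_upwards [sel_prod_ae m] with z hz
      rw [sel_T_split i T hi, selW, selW, selD_split hγ, selB_split,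
        sel_rpow_sub_one hz.1.1 a]
      ring
  · refine Finset.sum_congr rfl fun j _ => ?_
    congr 1
    rw [← sel_split_int i]
    refine integral_congr_ae ?_
    filter_upwards [sel_prod_ae m] with z hz
    rw [sel_T_split i T hi, selW, selW, selD_split hγ, selB_split, Fin.insertNth_apply_same,
      Fin.insertNth_apply_succAbove, sel_rpow_sub_one hz.1.1 a,
      sel_rpow_sub_one (sub_pos.2 hz.1.2) b]
    ring

lemma sel_swap_prod {n : ℕ} (i j : Fin n) (T : Finset (Fin n)) (hi : i ∉ T) (hj : j ∉ T)
    (x : Fin n → ℝ) : ∏ k ∈ T, x (Equiv.swap i j k) = ∏ k ∈ T, x k := by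
  refine Finset.prod_congr rfl fun k hk => ?_
  rw [Equiv.swap_apply_of_ne_of_ne]
  · rintro rfl; exact hi hk
  · rintro rfl; exact hj hk

lemma sel_term_mem {γ a b : ℝ} (hγ : 0 < γ) (ha : 0 < a) (hb : 0 < b) {m : ℕ}
    (i : Fin (m+1)) (T : Finset (Fin (m+1))) (hi : i ∈ T) (j : Fin m) (hj : i.succAbove j ∈ T) :
    ∫ x : Fin (m+1) → ℝ,
      (1 - x i) * (x i - x (i.succAbove j))⁻¹ * ((∏ k ∈ T, x k) * selW γ a b x) ∂(selP (m+1))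
      = - (1/2) * selJ γ a b T := by
  unfold selJ
  rw [← integral_const_mul]
  refine sel_symm i (i.succAbove j) _ _ (sel_singular_int hγ ha hb i T hi j) fun x => ?_
  have hne : i ≠ i.succAbove j := (Fin.succAbove_ne i j).symm
  rw [selW_comp]
  have e : ∏ k ∈ T, x (Equiv.swap i (i.succAbove j) k) = ∏ k ∈ T, x k := by
    have hj' : i.succAbove j ∈ T.erase i := Finset.mem_erase.2 ⟨hne.symm, hj⟩
    rw [← Finset.mul_prod_erase T _ hi, ← Finset.mul_prod_erase T _ hi,
      ← Finset.mul_prod_erase (T.erase i) _ hj', ← Finset.mul_prod_erase (T.erase i) _ hj',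
      sel_swap_prod _ _ _ (by simp) (by simp)]
    simp only [Equiv.swap_apply_left, Equiv.swap_apply_right]
    ring
  rw [e]
  simp only [Equiv.swap_apply_left, Equiv.swap_apply_right]
  rcases eq_or_ne (x i) (x (i.succAbove j)) with h | h
  · simp [selW, selD_zero hγ hne h]
  · have h1 : x i - x (i.succAbove j) ≠ 0 := sub_ne_zero.2 h
    rw [← neg_sub (x i) (x (i.succAbove j)), inv_neg]
    field_simp
    ring

lemma sel_term_notMem {γ a b : ℝ} (hγ : 0 < γ) (ha : 0 < a) (hb : 0 < b) {m : ℕ}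
    (i : Fin (m+1)) (T : Finset (Fin (m+1))) (hi : i ∈ T) (j : Fin m) (hj : i.succAbove j ∉ T) :
    ∫ x : Fin (m+1) → ℝ,
      (1 - x i) * (x i - x (i.succAbove j))⁻¹ * ((∏ k ∈ T, x k) * selW γ a b x) ∂(selP (m+1))
      = (1/2) * selJ γ a b (T.erase i) - selJ γ a b T := by
  have hne : i ≠ i.succAbove j := (Fin.succAbove_ne i j).symm
  have hj' : i.succAbove j ∉ T.erase i := fun h => hj (Finset.mem_of_mem_erase h)
  have hsw : selJ γ a b (insert (i.succAbove j) (T.erase i)) = selJ γ a b T := by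
    unfold selJ
    rw [← sel_perm_int (Equiv.swap i (i.succAbove j))]
    refine integral_congr_ae (Filter.Eventually.of_forall fun x => ?_)
    simp only
    rw [selW_comp, Finset.prod_insert hj', sel_swap_prod _ _ _ (by simp) hj',
      Equiv.swap_apply_right, Finset.mul_prod_erase T _ hi]
  have e : (1/2) * selJ γ a b (T.erase i) - selJ γ a b T = ∫ x : Fin (m+1) → ℝ,
      (1/2) * ((∏ k ∈ T.erase i, x k) * selW γ a b x - (∏ k ∈ T, x k) * selW γ a b x
        - (∏ k ∈ insert (i.succAbove j) (T.erase i), x k) * selW γ a b x) ∂(selP (m+1)) := by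
    rw [integral_const_mul,
      integral_sub (by exact (selTW_int hγ ha hb _).sub (selTW_int hγ ha hb _))
      (selTW_int hγ ha hb _), integral_sub (selTW_int hγ ha hb _) (selTW_int hγ ha hb _)]
    have h2 := hsw
    unfold selJ at h2 ⊢
    rw [h2]
    ring
  rw [e]
  refine sel_symm i (i.succAbove j) _ _ (sel_singular_int hγ ha hb i T hi j) fun x => ?_
  rw [selW_comp, Finset.prod_insert hj', ← Finset.mul_prod_erase T _ hi,
    ← Finset.mul_prod_erase T _ hi, sel_swap_prod _ _ _ (by simp) hj']
  simp only [Equiv.swap_apply_left, Equiv.swap_apply_right]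
  rcases eq_or_ne (x i) (x (i.succAbove j)) with h | h
  · simp [selW, selD_zero hγ hne h]
  · have h1 : x i - x (i.succAbove j) ≠ 0 := sub_ne_zero.2 h
    rw [← neg_sub (x i) (x (i.succAbove j)), inv_neg]
    field_simp
    ring

lemma sel_aomoto {γ a b : ℝ} (hγ : 0 < γ) (ha : 0 < a) (hb : 0 < b) {m : ℕ}
    (i : Fin (m+1)) (S : Finset (Fin (m+1))) (hi : i ∉ S) :
    selJ γ a b (insert i S) = selJ γ a b S *
      ((a + (m - S.card) * γ) / (a + b + (m + (m - S.card)) * γ)) := by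
  have key := sel_aomoto_raw hγ ha hb i (insert i S) (Finset.mem_insert_self i S)
  rw [Finset.erase_insert hi] at key
  have hterm : ∀ j : Fin m, 2 * γ * (∫ x : Fin (m+1) → ℝ,
      (1 - x i) * (x i - x (i.succAbove j))⁻¹ * ((∏ k ∈ insert i S, x k) * selW γ a b x)
        ∂(selP (m+1))) = (if i.succAbove j ∈ S then (- γ * selJ γ a b (insert i S))
        else γ * selJ γ a b S - 2 * γ * selJ γ a b (insert i S)) := by
    intro j
    have hne := Fin.succAbove_ne i j
    split_ifs with h
    · rw [sel_term_mem hγ ha hb i _ (Finset.mem_insert_self i S) j (Finset.mem_insert_of_mem h)]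
      ring
    · rw [sel_term_notMem hγ ha hb i _ (Finset.mem_insert_self i S) j
        (by simp [hne, h]), Finset.erase_insert hi]
      ring
  rw [Finset.sum_congr rfl fun j _ => hterm j, Finset.sum_ite, Finset.sum_const,
    Finset.sum_const] at key
  have hc1 : (Finset.univ.filter (fun j : Fin m => i.succAbove j ∈ S)).card = S.card := by
    rw [← Finset.card_image_of_injective _ (Fin.succAbove_right_injective (p := i))]
    congr 1
    ext k
    simp only [Finset.mem_image, Finset.mem_filter, Finset.mem_univ, true_and]
    constructor
    · rintro ⟨j, hj, rfl⟩; exact hj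
    · intro hk
      have : k ≠ i := by rintro rfl; exact hi hk
      obtain ⟨j, rfl⟩ := Fin.exists_succAbove_eq this
      exact ⟨j, hk, rfl⟩
  have hc2 : ((Finset.univ.filter (fun j : Fin m => ¬ i.succAbove j ∈ S)).card : ℝ)
      = m - S.card := by
    have := Finset.card_filter_add_card_filter_not (s := (Finset.univ : Finset (Fin m)))
      (fun j : Fin m => i.succAbove j ∈ S)
    rw [hc1, Finset.card_univ, Fintype.card_fin] at this
    have h' : ((S.card + _ : ℕ) : ℝ) = m := congrArg Nat.cast this
    push_cast at h'
    linarith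
  have hle : (S.card : ℝ) ≤ m := by
    have : 0 ≤ (m : ℝ) - S.card := by rw [← hc2]; positivity
    linarith
  rw [hc1, nsmul_eq_mul, nsmul_eq_mul, hc2] at key
  have hpos : 0 < a + b + (m + (m - S.card)) * γ := by
    have : 0 ≤ (m + (m - S.card : ℝ)) * γ :=
      mul_nonneg (add_nonneg (Nat.cast_nonneg _) (by linarith)) hγ.le
    linarith
  rw [← mul_div_assoc, eq_div_iff hpos.ne']
  linarith

lemma sel_aomoto_card {γ a b : ℝ} (hγ : 0 < γ) (ha : 0 < a) (hb : 0 < b) {m : ℕ}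
    (S : Finset (Fin (m+1))) :
    selJ γ a b S = selS γ a b (m+1) *
      ∏ k ∈ Finset.range S.card, ((a + (m - k : ℝ) * γ) / (a + b + (m + (m - k : ℝ)) * γ)) := by
  induction S using Finset.induction_on with
  | empty => simp [selJ, selS]
  | insert i S hi ih =>
    rw [sel_aomoto hγ ha hb i S hi, ih, Finset.card_insert_of_notMem hi, Finset.prod_range_succ]
    ring

lemma selS_shift {γ a b : ℝ} (hγ : 0 < γ) (ha : 0 < a) (hb : 0 < b) (m : ℕ) :
    selS γ (a+1) b (m+1) = selS γ a b (m+1) *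
      ∏ k ∈ Finset.range (m+1), ((a + k * γ) / (a + k * γ + (b + m * γ))) := by
  have h1 : selS γ (a+1) b (m+1) = selJ γ a b (Finset.univ : Finset (Fin (m+1))) := by
    unfold selS selJ
    refine integral_congr_ae ?_
    filter_upwards [selP_ae (m+1)] with x hx
    unfold selW selB
    rw [← mul_assoc, ← Finset.prod_mul_distrib]
    congr 1
    refine Finset.prod_congr rfl fun i _ => ?_
    rw [add_sub_cancel_right, sel_rpow_sub_one (hx i).1 a]
    ring
  rw [h1, sel_aomoto_card hγ ha hb, Finset.card_univ, Fintype.card_fin,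
    ← Finset.prod_range_reflect]
  congr 1
  refine Finset.prod_congr rfl fun k hk => ?_
  have : k ≤ m := Nat.lt_succ_iff.1 (Finset.mem_range.1 hk)
  rw [show m + 1 - 1 - k = m - k by omega, Nat.cast_sub this]
  congr 1 <;> ring

/-- The Euler type relation lowering the dimension. -/
lemma selS_euler {γ : ℝ} (hγ : 0 < γ) (m : ℕ) :
    selS γ 1 1 (m+1) * (1 + m * γ) = selS γ 1 (2*γ+1) m := by
  have hInteg := selW_int hγ one_pos one_pos m
  have key := sel_ibp one_pos le_rfl (by linarith : 0 < 2*γ) hInteg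
  have hB : ∀ (n : ℕ) (x : Fin n → ℝ), selB 1 1 x = 1 := by
    intro n x; simp [selB]
  have r : (∫ y : Fin m → ℝ, (0:ℝ) ^ (0:ℝ) * (∏ j, |1 - y j| ^ (2*γ)) * selW γ 1 1 y ∂(selP m))
      = selS γ 1 (2*γ+1) m := by
    unfold selS
    refine integral_congr_ae ?_
    filter_upwards [selP_ae m] with y hy
    rw [selW, selW, hB, rpow_zero, selB]
    have : ∀ j, |1 - y j| ^ (2*γ) = y j ^ ((1:ℝ)-1) * (1 - y j) ^ (2*γ+1-1) := by
      intro j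
      rw [abs_of_pos (sub_pos.2 (hy j).2)]; simp
    rw [Finset.prod_congr rfl fun j _ => this j]
    ring
  rw [r] at key
  rw [← key]
  have t1 : ∫ z : ℝ × (Fin m → ℝ), z.1 ^ ((1:ℝ)-1) * (1 - z.1) ^ (0:ℝ) *
      (∏ j, |z.1 - z.2 j| ^ (2*γ)) * selW γ 1 1 z.2 ∂(selNu.prod (selP m))
      = selS γ 1 1 (m+1) := by
    unfold selS
    rw [← sel_split_int 0]
    refine integral_congr_ae (Filter.Eventually.of_forall fun z => ?_)
    simp only
    rw [selW, selW, selD_split hγ, hB, hB]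
    simp
  have t3 : ∀ j : Fin m, ∫ z : ℝ × (Fin m → ℝ), z.1 ^ (1:ℝ) * (1 - z.1) ^ (0:ℝ) *
      (z.1 - z.2 j)⁻¹ * (∏ j, |z.1 - z.2 j| ^ (2*γ)) * selW γ 1 1 z.2 ∂(selNu.prod (selP m))
      = (1/2) * selS γ 1 1 (m+1) := by
    intro j
    obtain ⟨G, hG⟩ : ∃ G : (Fin (m+1) → ℝ) → ℝ, G = fun x : Fin (m+1) → ℝ =>
      x 0 * (x 0 - x ((0 : Fin (m+1)).succAbove j))⁻¹ * selW γ 1 1 x := ⟨_, rfl⟩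
    have e : ∀ z : ℝ × (Fin m → ℝ), z.1 ^ (1:ℝ) * (1 - z.1) ^ (0:ℝ) *
      (z.1 - z.2 j)⁻¹ * (∏ j, |z.1 - z.2 j| ^ (2*γ)) * selW γ 1 1 z.2 =
      G ((0 : Fin (m+1)).insertNth z.1 z.2) := by
      intro z
      rw [hG]
      simp only
      rw [selW, selW, selD_split hγ, hB, hB, Fin.insertNth_apply_same,
        Fin.insertNth_apply_succAbove]
      simp only [rpow_one, rpow_zero]
      ring
    have hi := sel_int3 one_pos le_rfl (by linarith : 0 < 2*γ) hInteg j
    simp only [e] at hi ⊢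
    rw [sel_split_integrable 0] at hi
    rw [sel_split_int 0, selS, ← integral_const_mul]
    refine sel_symm 0 ((0 : Fin (m+1)).succAbove j) _ _ hi fun x => ?_
    have hne : (0 : Fin (m+1)) ≠ (0 : Fin (m+1)).succAbove j := (Fin.succAbove_ne 0 j).symm
    simp only [hG]
    rw [selW_comp]
    simp only [Equiv.swap_apply_left, Equiv.swap_apply_right]
    rcases eq_or_ne (x 0) (x ((0 : Fin (m+1)).succAbove j)) with h | h
    · simp [selW, selD_zero hγ hne h]
    · have h1 : x 0 - x ((0 : Fin (m+1)).succAbove j) ≠ 0 := sub_ne_zero.2 h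
      rw [← neg_sub (x 0) (x ((0 : Fin (m+1)).succAbove j)), inv_neg]
      field_simp
      ring
  rw [t1]
  simp only [t3]
  simp
  ring

lemma selS_symm (γ a b : ℝ) (n : ℕ) : selS γ a b n = selS γ b a n := by
  have h1 : MeasurePreserving (fun t : ℝ => 1 - t) selNu selNu := by
    have h := (Measure.measurePreserving_sub_left (volume : Measure ℝ) 1).restrict_preimage
      (measurableSet_Ioo (a := (0:ℝ)) (b := 1))
    have e : (fun t : ℝ => 1 - t) ⁻¹' Set.Ioo 0 1 = Set.Ioo 0 1 := by
      ext t; simp only [Set.mem_preimage, Set.mem_Ioo]; constructor <;> rintro ⟨h, h'⟩ <;>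
        constructor <;> linarith
    rw [e] at h
    exact h
  have h2 : MeasurePreserving (fun (x : Fin n → ℝ) i => 1 - x i) (selP n) (selP n) :=
    measurePreserving_pi _ _ fun _ => h1
  have h3 : MeasurableEmbedding (fun (x : Fin n → ℝ) i => 1 - x i) :=
    (MeasurableEquiv.piCongrRight (fun _ : Fin n => MeasurableEquiv.subLeft (1:ℝ))).measurableEmbedding
  unfold selS
  rw [← h2.integral_comp h3]
  refine integral_congr_ae (Filter.Eventually.of_forall fun x => ?_)
  simp only
  unfold selW selB selD
  congr 1
  · refine Finset.prod_congr rfl fun i _ => ?_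
    rw [sub_sub_cancel, mul_comm]
  · refine Finset.prod_congr rfl fun i _ => Finset.prod_congr rfl fun j _ => ?_
    rw [sub_sub_sub_cancel_left, abs_sub_comm]

lemma selS_anti {γ a a' b : ℝ} (hγ : 0 < γ) (ha : 0 < a) (haa : a ≤ a') (hb : 0 < b) (n : ℕ) :
    selS γ a' b n ≤ selS γ a b n := by
  unfold selS
  refine integral_mono_ae (selW_int hγ (ha.trans_le haa) hb n) (selW_int hγ ha hb n) ?_
  filter_upwards [selP_ae n] with x hx
  unfold selW selB
  refine mul_le_mul_of_nonneg_right ?_ (selD_nonneg γ x)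
  refine Finset.prod_le_prod (fun i _ => mul_nonneg (rpow_nonneg (hx i).1.le _)
    (rpow_nonneg (by linarith [(hx i).2]) _)) fun i _ => ?_
  refine mul_le_mul_of_nonneg_right ?_ (rpow_nonneg (by linarith [(hx i).2]) _)
  exact rpow_le_rpow_of_exponent_ge (hx i).1 (hx i).2.le (by linarith)

lemma selS_nonneg (γ a b : ℝ) (n : ℕ) : 0 ≤ selS γ a b n := by
  unfold selS
  refine integral_nonneg_of_ae ?_
  filter_upwards [selP_ae n] with x hx using selW_nonneg γ a b hx

lemma sel_periodic {f g R : ℝ → ℝ} (hf : ∀ x, 0 < x → 0 ≤ f x) (hg : ∀ x, 0 < x → 0 < g x)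
    (fa : ∀ x y, 0 < x → x ≤ y → f y ≤ f x) (ga : ∀ x y, 0 < x → x ≤ y → g y ≤ g x)
    (fr : ∀ x, 0 < x → f (x+1) = f x * R x) (gr : ∀ x, 0 < x → g (x+1) = g x * R x)
    (hR : Tendsto R atTop (𝓝 1)) {x y : ℝ} (hx : 0 < x) (hxy : x ≤ y) :
    f y / g y = f x / g x := by
  have per1 : ∀ x, 0 < x → f (x+1) / g (x+1) = f x / g x := by
    intro x hx
    have h1 := hg (x+1) (by linarith)
    have h2 := hg x hx
    have h3 : R x ≠ 0 := by
      intro h; rw [gr x hx, h, mul_zero] at h1; exact lt_irrefl _ h1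
    rw [fr x hx, gr x hx, mul_div_mul_right _ _ h3]
  have per : ∀ (M : ℕ) x, 0 < x → f (x+M) / g (x+M) = f x / g x := by
    intro M
    induction M with
    | zero => intro x _; simp
    | succ M ih =>
      intro x hx
      rw [← ih x hx, ← per1 (x+M) (by positivity)]
      push_cast
      rw [add_assoc]
  have rat : ∀ k : ℕ, Tendsto (fun M : ℕ => g (x + M + k) / g (x + M)) atTop (𝓝 1) := by
    intro k
    induction k with
    | zero =>
      refine tendsto_const_nhds.congr fun M => ?_
      have := hg (x + M) (by positivity)
      simp [this.ne']
    | succ k ih =>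
      have h1 : Tendsto (fun M : ℕ => R (x + M + k)) atTop (𝓝 1) := by
        refine hR.comp ?_
        refine tendsto_atTop_add_const_right _ _ ?_
        exact tendsto_atTop_add_const_left _ _ tendsto_natCast_atTop_atTop
      have h2 := ih.mul h1
      rw [mul_one] at h2
      refine h2.congr fun M => ?_
      push_cast
      rw [← add_assoc, gr (x+M+k) (by positivity)]
      ring
  obtain ⟨k, hk⟩ := exists_nat_ge (y - x)
  have rk := rat k
  have hy : 0 < y := hx.trans_le hxy
  have Q0 : 0 ≤ f x / g x := div_nonneg (hf x hx) (hg x hx).le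
  apply le_antisymm
  · have lim : Tendsto (fun M : ℕ => (f x / g x) * (g (x + M + k) / g (x + M))⁻¹) atTop
        (𝓝 (f x / g x)) := by
      have := (rk.inv₀ one_ne_zero).const_mul (f x / g x)
      simpa using this
    refine ge_of_tendsto' lim fun M => ?_
    have p1 := hg (x + M + k) (by positivity)
    have p2 := hg (x + M) (by positivity)
    have p3 := hg (y + M) (by positivity)
    rw [← per M y hy, ← per M x hx, inv_div, div_mul_div_cancel₀ p2.ne']
    exact div_le_div₀ (hf _ (by positivity)) (fa _ _ (by positivity) (by linarith)) p1
      (ga _ _ (by positivity) (by linarith))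
  · have lim : Tendsto (fun M : ℕ => (f x / g x) * (g (x + M + k) / g (x + M))) atTop
        (𝓝 (f x / g x)) := by
      have := rk.const_mul (f x / g x)
      simpa using this
    refine le_of_tendsto' lim fun M => ?_
    have p1 := hg (x + M + k) (by positivity)
    have p2 := hg (x + M) (by positivity)
    have p3 := hg (y + M) (by positivity)
    have e := per k (x + M) (by positivity)
    rw [← per M y hy, ← per M x hx, ← e, div_mul_div_cancel₀ p1.ne']
    exact div_le_div₀ (hf _ (by positivity)) (fa _ _ (by positivity) (by linarith)) p3
      (ga _ _ (by positivity) (by linarith))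

lemma sel_gamma_anti {x y c : ℝ} (hx : 0 < x) (hxy : x ≤ y) (hc : 0 < c) :
    Gamma y / Gamma (y + c) ≤ Gamma x / Gamma (x + c) := by
  have hy : 0 < y := hx.trans_le hxy
  have p1 := Gamma_pos_of_pos hx
  have p2 := Gamma_pos_of_pos hy
  have p3 := Gamma_pos_of_pos (add_pos hx hc)
  have p4 := Gamma_pos_of_pos (add_pos hy hc)
  rw [div_le_div_iff₀ p4 p3]
  have hd : 0 < y + c - x := by linarith
  have hw : 0 ≤ (y - x) / (y + c - x) := div_nonneg (by linarith) hd.le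
  have hw' : 0 ≤ c / (y + c - x) := div_nonneg hc.le hd.le
  have hs : (y - x) / (y + c - x) + c / (y + c - x) = 1 := by field_simp; ring
  have c1 := convexOn_log_Gamma.2 (Set.mem_Ioi.2 hx) (Set.mem_Ioi.2 (add_pos hy hc)) hw hw' hs
  have c2 := convexOn_log_Gamma.2 (Set.mem_Ioi.2 hx) (Set.mem_Ioi.2 (add_pos hy hc)) hw' hw
    (by rw [add_comm]; exact hs)
  have e1 : (y - x) / (y + c - x) * x + c / (y + c - x) * (y + c) = x + c := by
    field_simp; ring
  have e2 : c / (y + c - x) * x + (y - x) / (y + c - x) * (y + c) = y := by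
    field_simp; ring
  simp only [smul_eq_mul, Function.comp] at c1 c2
  rw [e1] at c1
  rw [e2] at c2
  have c3 : Real.log (Gamma (x+c)) + Real.log (Gamma y)
      ≤ Real.log (Gamma x) + Real.log (Gamma (y+c)) := by
    have : Real.log (Gamma x) + Real.log (Gamma (y+c)) =
      ((y - x) / (y + c - x) + c / (y + c - x)) *
        (Real.log (Gamma x) + Real.log (Gamma (y+c))) := by rw [hs, one_mul]
    rw [this]
    linarith
  rw [← Real.log_mul p3.ne' p2.ne', ← Real.log_mul p1.ne' p4.ne'] at c3
  have := (Real.log_le_log_iff (mul_pos p3 p2) (mul_pos p1 p4)).1 c3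
  linarith

lemma selS_ratio {γ b : ℝ} (hγ : 0 < γ) (hb : 0 < b) (m : ℕ) {x y : ℝ} (hx : 0 < x)
    (hy : 0 < y) :
    selS γ y b (m+1) / (∏ k ∈ Finset.range (m+1),
      Gamma (y + k * γ) / Gamma (y + k * γ + (b + m * γ))) =
    selS γ x b (m+1) / (∏ k ∈ Finset.range (m+1),
      Gamma (x + k * γ) / Gamma (x + k * γ + (b + m * γ))) := by
  have hc : 0 < b + m * γ := by positivity
  have main : ∀ x y : ℝ, 0 < x → x ≤ y → 
    selS γ y b (m+1) / (∏ k ∈ Finset.range (m+1),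
      Gamma (y + k * γ) / Gamma (y + k * γ + (b + m * γ))) =
    selS γ x b (m+1) / (∏ k ∈ Finset.range (m+1),
      Gamma (x + k * γ) / Gamma (x + k * γ + (b + m * γ))) := by
    intro x y hx hxy
    refine sel_periodic (f := fun a => selS γ a b (m+1)) (g := fun a => ∏ k ∈ Finset.range (m+1),
      Gamma (a + k * γ) / Gamma (a + k * γ + (b + m * γ)))
      (R := fun a => ∏ k ∈ Finset.range (m+1), ((a + k * γ) / (a + k * γ + (b + m * γ))))
      ?_ ?_ ?_ ?_ ?_ ?_ ?_ hx hxy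
    · intro a _; exact selS_nonneg γ a b _
    · intro a ha
      exact Finset.prod_pos fun k _ => div_pos (Gamma_pos_of_pos (by positivity))
        (Gamma_pos_of_pos (by positivity))
    · intro a a' ha h; exact selS_anti hγ ha h hb _
    · intro a a' ha h
      have ha' := ha.trans_le h
      refine Finset.prod_le_prod (fun k _ => ?_) fun k _ => ?_
      · exact div_nonneg (Gamma_pos_of_pos (by positivity)).le
          (Gamma_pos_of_pos (by positivity)).le
      · exact sel_gamma_anti (by positivity) (by linarith) hc
    · intro a ha; exact selS_shift hγ ha hb m
    · intro a ha
      rw [← Finset.prod_mul_distrib]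
      refine Finset.prod_congr rfl fun k _ => ?_
      have q1 : 0 < a + k * γ := by positivity
      have q2 : 0 < a + k * γ + (b + m * γ) := by positivity
      rw [show a + 1 + k * γ = (a + k * γ) + 1 by ring,
        show a + k * γ + 1 + (b + m * γ) = (a + k * γ + (b + m * γ)) + 1 by ring,
        Gamma_add_one q1.ne', Gamma_add_one q2.ne', mul_comm, mul_div_mul_comm]
      ring
    · have : Tendsto (fun a : ℝ => ∏ k ∈ Finset.range (m+1),
        ((a + k * γ) / (a + k * γ + (b + m * γ)))) atTop
          (𝓝 (∏ k ∈ Finset.range (m+1), (1:ℝ))) := by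
        refine tendsto_finsetProd _ fun k _ => ?_
        have h0 : Tendsto (fun a : ℝ => 1 - (b + m * γ) * (a + k * γ + (b + m * γ))⁻¹) atTop
            (𝓝 (1 - (b + m * γ) * 0)) := by
          refine tendsto_const_nhds.sub (tendsto_const_nhds.mul ?_)
          refine tendsto_inv_atTop_zero.comp ?_
          exact tendsto_atTop_add_const_right _ _ (tendsto_atTop_add_const_right _ _ tendsto_id)
        rw [mul_zero, sub_zero] at h0
        refine h0.congr' ?_
        filter_upwards [eventually_gt_atTop 0] with a ha
        have q2 : 0 < a + k * γ + (b + m * γ) := by positivity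
        field_simp
        ring
      simpa using this
  rcases le_total x y with h | h
  · exact main x y hx h
  · exact (main y x hy h).symm

/-- The Gamma product. -/
noncomputable def selQ (γ : ℝ) (m : ℕ) (a b : ℝ) : ℝ :=
  ∏ j ∈ Finset.range (m+1), (Gamma (a + j * γ) * Gamma (b + j * γ) / Gamma (a + b + (m + j) * γ))

lemma selQ_pos {γ a b : ℝ} (hγ : 0 < γ) (ha : 0 < a) (hb : 0 < b) (m : ℕ) :
    0 < selQ γ m a b := by
  refine Finset.prod_pos fun j _ => div_pos (mul_pos ?_ ?_) ?_ <;>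
    exact Gamma_pos_of_pos (by positivity)

lemma selQ_symm (γ : ℝ) (m : ℕ) (a b : ℝ) : selQ γ m a b = selQ γ m b a := by
  refine Finset.prod_congr rfl fun j _ => ?_
  rw [mul_comm, add_comm a b]

lemma selQ_eq (γ : ℝ) (m : ℕ) (a b : ℝ) : selQ γ m a b =
    (∏ k ∈ Finset.range (m+1), Gamma (a + k * γ) / Gamma (a + k * γ + (b + m * γ))) *
      ∏ j ∈ Finset.range (m+1), Gamma (b + j * γ) := by
  rw [selQ, ← Finset.prod_mul_distrib]
  refine Finset.prod_congr rfl fun j _ => ?_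
  rw [show a + b + (m + j) * γ = a + j * γ + (b + m * γ) by ring]
  ring

lemma selS_ratio_one {γ a b : ℝ} (hγ : 0 < γ) (ha : 0 < a) (hb : 0 < b) (m : ℕ) :
    selS γ a b (m+1) / selQ γ m a b = selS γ 1 b (m+1) / selQ γ m 1 b := by
  rw [selQ_eq, selQ_eq, ← div_div, ← div_div, selS_ratio hγ hb m one_pos ha]

lemma selS_ratio_oneone {γ a b : ℝ} (hγ : 0 < γ) (ha : 0 < a) (hb : 0 < b) (m : ℕ) :
    selS γ a b (m+1) / selQ γ m a b = selS γ 1 1 (m+1) / selQ γ m 1 1 := by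
  rw [selS_ratio_one hγ ha hb, selS_symm, selQ_symm, selS_ratio_one hγ hb one_pos]

lemma selS_zero (γ a b : ℝ) : selS γ a b 0 = 1 := by
  unfold selS selW selB selD selP
  simp [measureReal_def]

/-- Selberg formula at the point `a = b = 1`. -/
lemma selS_one_one {γ : ℝ} (hγ : 0 < γ) (m : ℕ) :
    selS γ 1 1 (m+1) =
      (∏ j ∈ Finset.range (m+1), Gamma (1 + (j+1) * γ) / Gamma (1 + γ)) * selQ γ m 1 1 := by
  induction m with
  | zero =>
    have h := selS_euler hγ 0
    rw [selS_zero] at h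
    have g1 := (Gamma_pos_of_pos (by positivity : 0 < 1 + γ)).ne'
    have : selS γ 1 1 (0+1) = 1 := by simpa using h
    rw [this]
    have g2 : Gamma (1 + 1) = 1 := by
      rw [Gamma_add_one one_ne_zero, Gamma_one, mul_one]
    simp [selQ, g1, Gamma_one, g2]
  | succ m ih =>
    have h := selS_euler hγ (m+1)
    have hr := selS_ratio_oneone hγ one_pos (by linarith : 0 < 2 * γ + 1) m
    have hq := selQ_pos hγ one_pos one_pos m
    have hq' := selQ_pos hγ one_pos (by linarith : 0 < 2 * γ + 1) m
    rw [ih, mul_div_cancel_right₀ _ hq.ne', div_eq_iff hq'.ne'] at hr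
    rw [hr] at h
    have hpos : 0 < 1 + ((m+1 : ℕ) : ℝ) * γ := by positivity
    rw [← mul_left_inj' hpos.ne', h, Finset.prod_range_succ _ (m+1), mul_assoc, mul_assoc]
    congr 1
    have gp : ∀ k : ℕ, 0 < Gamma (1 + k * γ) := fun k => Gamma_pos_of_pos (by positivity)
    have g1 := Gamma_pos_of_pos (by positivity : 0 < 1 + γ)
    have e1 : selQ γ m 1 (2*γ+1) = (∏ j ∈ Finset.range (m+1), Gamma (1 + j * γ)) *
        (∏ j ∈ Finset.range (m+1), Gamma (1 + (j+2 : ℕ) * γ)) /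
        (∏ j ∈ Finset.range (m+1), Gamma (2 + (m + 1 + (j+1 : ℕ)) * γ)) := by
      rw [selQ, ← Finset.prod_mul_distrib, ← Finset.prod_div_distrib]
      refine Finset.prod_congr rfl fun j _ => ?_
      push_cast
      congr 2
      · congr 1; ring
      · ring
    have e2 : selQ γ (m+1) 1 1 = (∏ j ∈ Finset.range (m+2), Gamma (1 + j * γ)) *
        (∏ j ∈ Finset.range (m+2), Gamma (1 + j * γ)) /
        (∏ j ∈ Finset.range (m+2), Gamma (2 + (m + 1 + (j : ℕ)) * γ)) := by
      rw [selQ, ← Finset.prod_mul_distrib, ← Finset.prod_div_distrib]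
      refine Finset.prod_congr rfl fun j _ => ?_
      push_cast
      congr 2
      ring
    have e3 : (∏ j ∈ Finset.range (m+2), Gamma (1 + j * γ)) * Gamma (1 + (m+2 : ℕ) * γ)
        = Gamma (1 + γ) * ∏ j ∈ Finset.range (m+1), Gamma (1 + (j+2 : ℕ) * γ) := by
      have := Finset.prod_range_succ (fun j : ℕ => Gamma (1 + j * γ)) (m+2)
      rw [← this, Finset.prod_range_succ', Finset.prod_range_succ']
      simp only [Nat.cast_zero, zero_mul, add_zero, Gamma_one, mul_one, zero_add, Nat.cast_one,
        one_mul]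
      rw [mul_comm]
    have e4 : (∏ j ∈ Finset.range (m+2), Gamma (1 + j * γ)) =
      (∏ j ∈ Finset.range (m+1), Gamma (1 + j * γ)) * Gamma (1 + (m+1 : ℕ) * γ) :=
      Finset.prod_range_succ _ _
    have e5 : (∏ j ∈ Finset.range (m+2), Gamma (2 + (m + 1 + (j : ℕ)) * γ))
      = (∏ j ∈ Finset.range (m+1), Gamma (2 + (m + 1 + (j+1 : ℕ)) * γ)) *
        ((1 + ((m+1 : ℕ):ℝ) * γ) * Gamma (1 + (m+1 : ℕ) * γ)) := by
      rw [Finset.prod_range_succ', ← Gamma_add_one hpos.ne']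
      congr 2
      push_cast
      ring
    have p1 : 0 < ∏ j ∈ Finset.range (m+1), Gamma (1 + j * γ) := Finset.prod_pos fun j _ => gp j
    have p2 : 0 < ∏ j ∈ Finset.range (m+1), Gamma (2 + (m + 1 + (j+1 : ℕ)) * γ) :=
      Finset.prod_pos fun j _ => Gamma_pos_of_pos (by positivity)
    have p3 := gp (m+1)
    have p4 := gp (m+2)
    have e6 : Gamma (1 + (((m+1 : ℕ):ℝ) + 1) * γ) = Gamma (1 + (m+2 : ℕ) * γ) := by
      congr 1; push_cast; ring
    rw [e1, e2, e5, e6]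
    nth_rewrite 1 [e4]
    have e7 : ∏ j ∈ Finset.range (m+1), Gamma (1 + (j+2 : ℕ) * γ) =
      (∏ j ∈ Finset.range (m+2), Gamma (1 + j * γ)) * Gamma (1 + (m+2 : ℕ) * γ) / Gamma (1 + γ) := by
      rw [e3, mul_div_cancel_left₀ _ g1.ne']
    rw [e7]
    generalize (∏ j ∈ Finset.range (m+1), Gamma (1 + j * γ)) = A1 at *
    generalize (∏ j ∈ Finset.range (m+2), Gamma (1 + j * γ)) = A2 at *
    generalize (∏ j ∈ Finset.range (m+1), Gamma (2 + (m + 1 + (j+1 : ℕ)) * γ)) = A3 at *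
    generalize Gamma (1 + (m+1 : ℕ) * γ) = G1 at *
    generalize Gamma (1 + (m+2 : ℕ) * γ) = G2 at *
    generalize Gamma (1 + γ) = G3 at *
    generalize 1 + ((m+1 : ℕ) : ℝ) * γ = G4 at *
    field_simp

/-- Selberg formula over the cube. -/
lemma selS_formula {γ a b : ℝ} (hγ : 0 < γ) (ha : 0 < a) (hb : 0 < b) (m : ℕ) :
    selS γ a b (m+1) =
      (∏ j ∈ Finset.range (m+1), Gamma (1 + (j+1) * γ) / Gamma (1 + γ)) * selQ γ m a b := by
  have h := selS_ratio_oneone hγ ha hb m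
  rw [selS_one_one hγ, mul_div_cancel_right₀ _ (selQ_pos hγ one_pos one_pos m).ne',
    div_eq_iff (selQ_pos hγ ha hb m).ne'] at h
  exact h

lemma sel_prod_pairs {n : ℕ} (f : Fin n → Fin n → ℝ) (hf : ∀ i j, f i j = f j i) :
    ∏ i, ∏ j, (if i = j then (1:ℝ) else f i j) =
      ∏ p ∈ Finset.univ.filter (fun p : Fin n × Fin n => p.1 < p.2), (f p.1 p.2 * f p.1 p.2) := by
  rw [← Finset.prod_product' Finset.univ Finset.univ
    (fun i j => if i = j then (1:ℝ) else f i j), Finset.univ_product_univ]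
  have h1 : ∀ p : Fin n × Fin n, (if p.1 = p.2 then (1:ℝ) else f p.1 p.2) =
      (if p.1 < p.2 then f p.1 p.2 else 1) * (if p.2 < p.1 then f p.2 p.1 else 1) := by
    intro p
    rcases lt_trichotomy p.1 p.2 with h | h | h
    · simp [h, h.ne, h.not_gt]
    · simp [h]
    · simp [h, h.ne', h.not_gt, hf p.1 p.2]
  rw [Finset.prod_congr rfl fun p _ => h1 p, Finset.prod_mul_distrib, Finset.prod_mul_distrib]
  have h2 : ∏ p : Fin n × Fin n, (if p.2 < p.1 then f p.2 p.1 else 1) =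
      ∏ p : Fin n × Fin n, (if p.1 < p.2 then f p.1 p.2 else 1) :=
    Equiv.prod_comp (Equiv.prodComm (Fin n) (Fin n))
      (fun p : Fin n × Fin n => if p.1 < p.2 then f p.1 p.2 else 1)
  rw [h2, Finset.prod_filter]

lemma selD_mono {κ : ℝ} (hκ : 0 < κ) {n : ℕ} {x : Fin n → ℝ} (hx : Monotone x) :
    ∏ p ∈ Finset.univ.filter (fun p : Fin n × Fin n => p.1 < p.2), (x p.2 - x p.1) ^ κ
      = selD (κ/2) x := by
  unfold selD
  rw [sel_prod_pairs (fun i j => |x i - x j| ^ (κ/2)) fun i j => by rw [abs_sub_comm]]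
  refine Finset.prod_congr rfl fun p hp => ?_
  have hlt := (Finset.mem_filter.1 hp).2
  rw [← rpow_add_of_nonneg (abs_nonneg _) (by positivity) (by positivity), add_halves,
    abs_sub_comm, abs_of_nonneg (sub_nonneg.2 (hx hlt.le))]

lemma selD_scale {γ : ℝ} {m : ℕ} (t : Fin (m+1) → ℝ) :
    selD γ (fun i => 2 * t i - 1) = ((2:ℝ) ^ γ) ^ (m * (m+1)) * selD γ t := by
  have h : ∀ i j : Fin (m+1), (if i = j then (1:ℝ) else |(2 * t i - 1) - (2 * t j - 1)| ^ γ)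
      = (if i = j then (1:ℝ) else (2:ℝ) ^ γ) * (if i = j then (1:ℝ) else |t i - t j| ^ γ) := by
    intro i j
    split_ifs
    · simp
    · rw [show (2 * t i - 1) - (2 * t j - 1) = 2 * (t i - t j) by ring, abs_mul,
        abs_of_pos (by norm_num : (0:ℝ) < 2), mul_rpow (by norm_num) (abs_nonneg _)]
  unfold selD
  simp only [h, Finset.prod_mul_distrib]
  congr 1
  have h2 : ∀ i : Fin (m+1), (∏ j, if i = j then (1:ℝ) else (2:ℝ) ^ γ) = ((2:ℝ) ^ γ) ^ m := by
    intro i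
    rw [Fin.prod_univ_succAbove _ i]
    simp [(Fin.succAbove_ne _ _).symm]
  simp only [h2]
  simp [pow_mul]

/-- The ordered part of a cube. -/
def selA (n : ℕ) (l u : ℝ) : Set (Fin n → ℝ) := {x | Monotone x ∧ ∀ i, x i ∈ Set.Icc l u}

lemma selA_meas (n : ℕ) (l u : ℝ) : MeasurableSet (selA n l u) := by
  have : selA n l u = (⋂ i, ⋂ j, ⋂ (_ : i ≤ j), {x | x i ≤ x j}) ∩
      Set.univ.pi fun _ => Set.Icc l u := by
    ext x
    simp [selA, Monotone, Pi.le_def, forall_and]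
  rw [this]
  refine MeasurableSet.inter ?_ (MeasurableSet.univ_pi fun _ => measurableSet_Icc)
  refine MeasurableSet.iInter fun i => MeasurableSet.iInter fun j => MeasurableSet.iInter fun _ => ?_
  exact measurableSet_le (measurable_pi_apply i) (measurable_pi_apply j)

lemma selP_eq (n : ℕ) : selP n =
    (volume : Measure (Fin n → ℝ)).restrict (Set.univ.pi fun _ => Set.Icc (0:ℝ) 1) := by
  unfold selP selNu
  rw [volume_pi, Measure.restrict_pi_pi]
  congr 1
  funext _
  exact Measure.restrict_congr_set Ioo_ae_eq_Icc

lemma sel_vol_perm_int {n : ℕ} (σ : Equiv.Perm (Fin n)) (f : (Fin n → ℝ) → ℝ) :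
    ∫ x : Fin n → ℝ, f (fun i => x (σ i)) = ∫ x, f x := by
  have h := volume_measurePreserving_piCongrLeft (fun _ : Fin n => ℝ) σ.symm
  have h2 := h.integral_comp (MeasurableEquiv.measurableEmbedding _) f
  rw [← sel_perm_coe] at h2
  exact h2

lemma sel_vol_perm_integrable {n : ℕ} (σ : Equiv.Perm (Fin n)) (f : (Fin n → ℝ) → ℝ)
    (hf : Integrable f) : Integrable (fun x : Fin n → ℝ => f (fun i => x (σ i))) := by
  have h := volume_measurePreserving_piCongrLeft (fun _ : Fin n => ℝ) σ.symm
  rw [← sel_perm_coe] at h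
  exact h.integrable_comp_of_integrable hf

lemma selS_ordered {γ a b : ℝ} (hγ : 0 < γ) (ha : 0 < a) (hb : 0 < b) (n : ℕ) :
    ∫ x, (selA n 0 1).indicator (selW γ a b) x = selS γ a b n / n.factorial := by
  classical
  have hcm : MeasurableSet (Set.univ.pi fun _ : Fin n => Set.Icc (0:ℝ) 1) :=
    MeasurableSet.univ_pi fun _ => measurableSet_Icc
  have hInteg : Integrable ((selA n 0 1).indicator (selW γ a b)) := by
    rw [integrable_indicator_iff (selA_meas n 0 1)]
    have := selW_int hγ ha hb n
    rw [selP_eq] at this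
    refine IntegrableOn.mono_set this ?_
    intro x hx i _
    exact hx.2 i
  have hsum : ∀ x : Fin n → ℝ, ∑ σ : Equiv.Perm (Fin n),
      (selA n 0 1).indicator (selW γ a b) (fun i => x (σ i)) =
      (Set.univ.pi fun _ : Fin n => Set.Icc (0:ℝ) 1).indicator (selW γ a b) x := by
    intro x
    by_cases hinj : Function.Injective x
    · rw [Finset.sum_eq_single (Tuple.sort x)]
      · have hm := Tuple.monotone_sort x
        by_cases hc : x ∈ Set.univ.pi fun _ : Fin n => Set.Icc (0:ℝ) 1
        · rw [Set.indicator_of_mem hc, Set.indicator_of_mem, selW_comp]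
          exact ⟨hm, fun i => hc _ (Set.mem_univ _)⟩
        · rw [Set.indicator_of_notMem hc, Set.indicator_of_notMem]
          rintro ⟨_, h⟩
          refine hc fun i _ => ?_
          have := h ((Tuple.sort x).symm i)
          simpa using this
      · intro σ _ hσ
        rw [Set.indicator_of_notMem]
        rintro ⟨h, _⟩
        apply hσ
        have := Tuple.unique_monotone (f := x) (σ := σ) (τ := Tuple.sort x) h
          (Tuple.monotone_sort x)
        ext i
        exact congrArg Fin.val (hinj (congrFun this i))
      · intro h; exact absurd (Finset.mem_univ _) h
    · have h0 : selW γ a b x = 0 := by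
        simp only [Function.Injective, not_forall] at hinj
        obtain ⟨i, j, hij, hne⟩ := hinj
        rw [selW, selD_zero hγ hne hij, mul_zero]
      rw [Finset.sum_eq_zero, Set.indicator_apply, h0, ite_self]
      intro σ _
      rw [Set.indicator_apply, selW_comp, h0, ite_self]
  have h1 : selS γ a b n = ∫ x, (Set.univ.pi fun _ : Fin n => Set.Icc (0:ℝ) 1).indicator
      (selW γ a b) x := by
    rw [integral_indicator hcm, ← selP_eq]
    rfl
  rw [h1]
  simp only [← hsum]
  rw [integral_finsetSum _ fun σ _ => sel_vol_perm_integrable σ _ hInteg]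
  simp only [sel_vol_perm_int]
  rw [Finset.sum_const, Finset.card_univ, Fintype.card_perm, Fintype.card_fin, nsmul_eq_mul,
    mul_div_cancel_left₀]
  exact_mod_cast n.factorial_ne_zero

theorem jacobi_selberg_integral
    (N : ℕ) (hN : 1 ≤ N) (a b : ℝ) (ha : 0 ≤ a) (hb : 0 < b)
    (α β : ℝ) (hα : α = a + b - 1) (hβ : β = b - 1)
    (κ : ℝ) (hκ : 0 < κ)
    (A : Set (Fin N → ℝ))
    (hA : A = {x | Monotone x ∧ ∀ i, x i ∈ Set.Icc (-1 : ℝ) 1})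
    : (∫ x in A,
        (∏ p ∈ Finset.univ.filter (fun p : Fin N × Fin N => p.1 < p.2), (x p.2 - x p.1) ^ κ) *
          ∏ i, ((1 - x i) ^ (κ * (a + b) / 2 - 1 / 2) * (1 + x i) ^ (κ * b / 2 - 1 / 2))) =
      (2 : ℝ) ^ (κ * (N : ℝ) * ((N : ℝ) + α + β + 1) / 2) / (N.factorial : ℝ) *
        ∏ j ∈ Finset.range N,
          Real.Gamma (1 + ((j : ℝ) + 1) * κ / 2) / Real.Gamma (1 + κ / 2) *
            (Real.Gamma (κ * (β + (j : ℝ) + 1) / 2 + 1 / 2) *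
              Real.Gamma (κ * (α + (j : ℝ) + 1) / 2 + 1 / 2) /
              Real.Gamma (κ * ((N : ℝ) + α + β + (j : ℝ) + 1) / 2 + 1)) := by
  obtain ⟨m, rfl⟩ : ∃ m, N = m + 1 := ⟨N - 1, by omega⟩
  have hA' : A = selA (m+1) (-1) 1 := hA
  have hγ : 0 < κ / 2 := by positivity
  have ha' : 0 < κ * b / 2 + 1 / 2 := by positivity
  have hb' : 0 < κ * (a + b) / 2 + 1 / 2 := by positivity
  rw [hA', ← integral_indicator (selA_meas _ _ _)]
  obtain ⟨F, hF⟩ : ∃ F : (Fin (m+1) → ℝ) → ℝ, F = fun x =>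
    (∏ p ∈ Finset.univ.filter (fun p : Fin (m+1) × Fin (m+1) => p.1 < p.2),
      (x p.2 - x p.1) ^ κ) *
      ∏ i, ((1 - x i) ^ (κ * (a + b) / 2 - 1 / 2) * (1 + x i) ^ (κ * b / 2 - 1 / 2)) := ⟨_, rfl⟩
  rw [← hF]
  obtain ⟨E, hE⟩ : ∃ E : ℝ, E = ((2:ℝ) ^ (κ/2)) ^ (m * (m+1)) *
    ((2:ℝ) ^ (κ * (a + b) / 2 - 1 / 2) * (2:ℝ) ^ (κ * b / 2 - 1 / 2)) ^ (m+1) := ⟨_, rfl⟩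
  have hpt : ∀ t : Fin (m+1) → ℝ, (selA (m+1) (-1) 1).indicator F ((2:ℝ) • t - 1) =
      E * (selA (m+1) 0 1).indicator
        (selW (κ/2) (κ * b / 2 + 1 / 2) (κ * (a + b) / 2 + 1 / 2)) t := by
    intro t
    have hfun : (2:ℝ) • t - 1 = fun i => 2 * t i - 1 := by
      funext i; simp
    rw [hfun]
    by_cases ht : t ∈ selA (m+1) 0 1
    · have hmem : (fun i => 2 * t i - 1) ∈ selA (m+1) (-1) 1 := by
        refine ⟨fun i j hij => ?_, fun i => ?_⟩
        · have := ht.1 hij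
          simp only; linarith
        · have h1 := (ht.2 i).1
          have h2 := (ht.2 i).2
          constructor <;> simp only <;> linarith
      rw [Set.indicator_of_mem ht, Set.indicator_of_mem hmem, hF]
      simp only
      have hD := selD_mono hκ hmem.1
      rw [hD, selD_scale, selW, selB, hE]
      have hfac : ∀ i, (1 - (2 * t i - 1)) ^ (κ * (a + b) / 2 - 1 / 2) *
          (1 + (2 * t i - 1)) ^ (κ * b / 2 - 1 / 2) =
          ((2:ℝ) ^ (κ * (a + b) / 2 - 1 / 2) * (2:ℝ) ^ (κ * b / 2 - 1 / 2)) *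
          (t i ^ (κ * b / 2 + 1 / 2 - 1) * (1 - t i) ^ (κ * (a + b) / 2 + 1 / 2 - 1)) := by
        intro i
        have h1 := (ht.2 i).1
        have h2 := (ht.2 i).2
        rw [show 1 - (2 * t i - 1) = 2 * (1 - t i) by ring,
          show 1 + (2 * t i - 1) = 2 * t i by ring, mul_rpow (by norm_num) (by linarith),
          mul_rpow (by norm_num) h1,
          show κ * b / 2 + 1 / 2 - 1 = κ * b / 2 - 1 / 2 by ring,
          show κ * (a + b) / 2 + 1 / 2 - 1 = κ * (a + b) / 2 - 1 / 2 by ring]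
        ring
      rw [Finset.prod_congr rfl fun i _ => hfac i, Finset.prod_mul_distrib, Finset.prod_const,
        Finset.card_univ, Fintype.card_fin]
      ring
    · have hmem : (fun i => 2 * t i - 1) ∉ selA (m+1) (-1) 1 := by
        rintro ⟨h, h'⟩
        refine ht ⟨fun i j hij => ?_, fun i => ?_⟩
        · have := h hij
          simp only at this; linarith
        · have h1 := (h' i).1
          have h2 := (h' i).2
          constructor <;> linarith
      rw [Set.indicator_of_notMem ht, Set.indicator_of_notMem hmem, mul_zero]
  have hscale : ∫ x, (selA (m+1) (-1) 1).indicator F x =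
      (2:ℝ)^(m+1) * ∫ t : Fin (m+1) → ℝ, (selA (m+1) (-1) 1).indicator F ((2:ℝ) • t - 1) := by
    have h1 := Measure.integral_comp_smul (volume : Measure (Fin (m+1) → ℝ))
      (fun x => (selA (m+1) (-1) 1).indicator F (x - 1)) 2
    rw [h1, integral_sub_right_eq_self ((selA (m+1) (-1) 1).indicator F)]
    rw [Module.finrank_fin_fun, smul_eq_mul, abs_of_pos (by positivity)]
    field_simp
  rw [hscale]
  simp only [hpt]
  rw [integral_const_mul, selS_ordered hγ ha' hb', selS_formula hγ ha' hb', selQ,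
    ← Finset.prod_mul_distrib]
  have hconst : (2:ℝ)^(m+1) * E =
      (2:ℝ) ^ (κ * ((m+1 : ℕ) : ℝ) * (((m+1 : ℕ) : ℝ) + α + β + 1) / 2) := by
    have h2 : (0:ℝ) < 2 := by norm_num
    rw [hE, ← rpow_add h2, ← rpow_natCast, ← rpow_natCast, ← rpow_natCast, ← rpow_mul h2.le,
      ← rpow_mul h2.le, ← rpow_add h2, ← rpow_add h2, hα, hβ]
    congr 1
    push_cast
    ring
  rw [← hconst]
  have hprod : ∏ j ∈ Finset.range (m+1),
      (Gamma (1 + ((j:ℝ) + 1) * (κ / 2)) / Gamma (1 + κ / 2) *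
        (Gamma (κ * b / 2 + 1 / 2 + j * (κ / 2)) * Gamma (κ * (a + b) / 2 + 1 / 2 + j * (κ / 2)) /
          Gamma (κ * b / 2 + 1 / 2 + (κ * (a + b) / 2 + 1 / 2) + (m + j) * (κ / 2)))) =
      ∏ j ∈ Finset.range (m+1),
          Real.Gamma (1 + ((j : ℝ) + 1) * κ / 2) / Real.Gamma (1 + κ / 2) *
            (Real.Gamma (κ * (β + (j : ℝ) + 1) / 2 + 1 / 2) *
              Real.Gamma (κ * (α + (j : ℝ) + 1) / 2 + 1 / 2) /
              Real.Gamma (κ * (((m+1 : ℕ) : ℝ) + α + β + (j : ℝ) + 1) / 2 + 1)) := by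
    refine Finset.prod_congr rfl fun j _ => ?_
    rw [hα, hβ]
    congr 1
    · congr 2; ring
    · congr 1
      · congr 1
        · congr 1; ring
        · congr 1; ring
      · congr 1; push_cast; ring
  rw [hprod]
  ring
end

section
/- Let N ≥ 1, a ≥ 0, b > 0, and set α = a+b−1 and β = b−1. Let z_1 < ... < z_N be the ordered zeros of the Jacobi polynomial P_N^{(α,β)}, let φ(x) = Π_{1≤i<j≤N}(x_j−x_i)·Π_{j=1}^N(1−x_j)^{(a+b)/2}(1+x_j)^{b/2}, and for κ > 0 let c_κ = (∫_A Π_{i<j}(x_j−x_i)^κ Π_i(1−x_i)^{κ(a+b)/2−1/2}(1+x_i)^{κb/2−1/2} dx)^{−1} be the normalizing constant of the β-Jacobi ensemble on the alcove A = {x ∈ ℝ^N : −1 ≤ x_1 ≤ ... ≤ x_N ≤ 1}. Then lim_{κ→∞} c_κ · κ^{−N/2} · φ(z)^κ · Π_{j=1}^N (1−z_j²)^{−1/2} = √(N!) · ((N+α+β+1)_N)^{3/2} / (2^{2N} π^{N/2} √((α+1)_N (β+1)_N)), where (x)_N = x(x+1)···(x+N−1) denotes the Pochhammer symbol. -/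
open MeasureTheory Filter Real Finset Topology

/-- The Jacobi differential operator on polynomials. -/
noncomputable def jacL (α β : ℝ) (p : Polynomial ℝ) : Polynomial ℝ :=
  (1 - Polynomial.X ^ 2) * Polynomial.derivative (Polynomial.derivative p) +
    (Polynomial.C (β - α) - Polynomial.C (α + β + 2) * Polynomial.X) * Polynomial.derivative p

lemma jacL_coeff (α β : ℝ) (p : Polynomial ℝ) (k : ℕ) :
    (jacL α β p).coeff k = (k + 2) * (k + 1) * p.coeff (k + 2) + (β - α) * (k + 1) * p.coeff (k + 1)
      - k * (k + α + β + 1) * p.coeff k := by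
  have h : jacL α β p = Polynomial.derivative (Polynomial.derivative p)
      - Polynomial.X ^ 2 * Polynomial.derivative (Polynomial.derivative p) +
      Polynomial.C (β - α) * Polynomial.derivative p -
      Polynomial.C (α + β + 2) * (Polynomial.X * Polynomial.derivative p) := by
    unfold jacL; ring
  rw [h]
  simp only [Polynomial.coeff_add, Polynomial.coeff_sub, Polynomial.coeff_C_mul]
  rcases k with _ | _ | k
  · simp [Polynomial.coeff_derivative, Polynomial.coeff_X_pow_mul']
    ring
  · simp [Polynomial.coeff_derivative, Polynomial.coeff_X_pow_mul', Polynomial.coeff_X_mul]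
    ring
  · simp [Polynomial.coeff_derivative, Polynomial.coeff_X_pow_mul', Polynomial.coeff_X_mul]
    ring

lemma jacL_eval (α β : ℝ) (p : Polynomial ℝ) (x : ℝ) :
    (jacL α β p).eval x = (1 - x ^ 2) * (p.derivative.derivative).eval x +
      (β - α - (α + β + 2) * x) * p.derivative.eval x := by
  simp [jacL]

lemma jac_weight_integrable (α β : ℝ) (hα : -1 < α) (hβ : -1 < β) :
    IntegrableOn (fun x : ℝ => (1 - x) ^ α * (1 + x) ^ β) (Set.Ioc (-1) 1) := by
  have h1 : IntervalIntegrable (fun x : ℝ => (1 - x) ^ α * (1 + x) ^ β) volume (-1) 0 := by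
    have := (intervalIntegral.intervalIntegrable_rpow' (a := 0) (b := 1) hβ).comp_add_right 1
    simp only [zero_sub, sub_self] at this
    have h2 := this.continuousOn_mul (g := fun x : ℝ => (1 - x) ^ α) (by
      intro x hx
      rw [Set.uIcc_of_le (by norm_num)] at hx
      apply ContinuousAt.continuousWithinAt
      apply ContinuousAt.rpow_const (by fun_prop)
      left; linarith [hx.2])
    refine h2.congr ?_
    intro x _
    simp [add_comm]
  have h2 : IntervalIntegrable (fun x : ℝ => (1 - x) ^ α * (1 + x) ^ β) volume 0 1 := by
    have := (intervalIntegral.intervalIntegrable_rpow' (a := 1) (b := 0) hα).comp_sub_left 1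
    simp only [sub_self, sub_zero] at this
    exact this.mul_continuousOn (g := fun x : ℝ => (1 + x) ^ β) (by
      intro x hx
      rw [Set.uIcc_of_le (by norm_num)] at hx
      apply ContinuousAt.continuousWithinAt
      apply ContinuousAt.rpow_const (by fun_prop)
      left; linarith [hx.1])
  exact (intervalIntegrable_iff_integrableOn_Ioc_of_le (by norm_num)).1 (h1.trans h2)

lemma jac_poly_integrable (α β : ℝ) (hα : -1 < α) (hβ : -1 < β) (F : Polynomial ℝ) :
    IntervalIntegrable (fun x : ℝ => F.eval x * (1 - x) ^ α * (1 + x) ^ β) volume (-1) 1 := by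
  have h := (intervalIntegrable_iff_integrableOn_Ioc_of_le (by norm_num)).2
    (jac_weight_integrable α β hα hβ)
  have := h.continuousOn_mul (g := fun x => F.eval x) (F.continuous.continuousOn)
  simpa [mul_assoc] using this

lemma jac_poly_integrableOn (α β : ℝ) (hα : -1 < α) (hβ : -1 < β) (F : Polynomial ℝ) :
    IntegrableOn (fun x : ℝ => F.eval x * (1 - x) ^ α * (1 + x) ^ β) (Set.Ioo (-1) 1) :=
  (((intervalIntegrable_iff_integrableOn_Ioc_of_le (by norm_num)).1
    (jac_poly_integrable α β hα hβ F))).mono_set Set.Ioo_subset_Ioc_self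

lemma jac_ibp (α β : ℝ) (hα : -1 < α) (hβ : -1 < β) (F : Polynomial ℝ) :
    ∫ x in Set.Ioo (-1 : ℝ) 1, ((1 - Polynomial.X ^ 2) * F.derivative +
      (Polynomial.C (β - α) - Polynomial.C (α + β + 2) * Polynomial.X) * F).eval x *
       (1 - x) ^ α * (1 + x) ^ β = 0 := by
  rw [← integral_Ioc_eq_integral_Ioo, ← intervalIntegral.integral_of_le (by norm_num)]
  rw [intervalIntegral.integral_eq_sub_of_hasDerivAt_of_le (f := fun x =>
    F.eval x * ((1 - x) ^ (α + 1) * (1 + x) ^ (β + 1))) (by norm_num) ?_ ?_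
    (jac_poly_integrable α β hα hβ _)]
  · simp [Real.zero_rpow (by linarith : α + 1 ≠ 0), Real.zero_rpow (by linarith : β + 1 ≠ 0)]
  · apply F.continuous.continuousOn.mul
    apply ContinuousOn.mul
    · exact ContinuousOn.rpow_const (by fun_prop) (fun x _ => Or.inr (by linarith))
    · exact ContinuousOn.rpow_const (by fun_prop) (fun x _ => Or.inr (by linarith))
  · intro x hx
    have h1 : 0 < 1 - x := by linarith [hx.2]
    have h2 : 0 < 1 + x := by linarith [hx.1]
    have d1 : HasDerivAt (fun x : ℝ => (1 - x) ^ (α + 1)) (-1 * (α + 1) * (1 - x) ^ (α + 1 - 1)) x :=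
      HasDerivAt.rpow_const ((hasDerivAt_id x).const_sub 1) (Or.inl h1.ne')
    have d2 : HasDerivAt (fun x : ℝ => (1 + x) ^ (β + 1)) (1 * (β + 1) * (1 + x) ^ (β + 1 - 1)) x :=
      HasDerivAt.rpow_const ((hasDerivAt_id x).const_add 1) (Or.inl h2.ne')
    have := (F.hasDerivAt x).mul (d1.mul d2)
    refine this.congr_deriv ?_
    simp only [add_sub_cancel_right, Real.rpow_add_one h1.ne', Real.rpow_add_one h2.ne', Pi.mul_apply]
    simp
    ring

lemma jac_ode (N : ℕ) (hN : 1 ≤ N) (α β : ℝ) (hα : -1 < α) (hβ : -1 < β)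
    (P : Polynomial ℝ) (hPdeg : P.natDegree = N)
    (hPorth : ∀ Q : Polynomial ℝ, Q.natDegree < N →
      ∫ x in Set.Ioo (-1 : ℝ) 1,
        P.eval x * Q.eval x * (1 - x) ^ α * (1 + x) ^ β = 0) :
    jacL α β P + Polynomial.C (N * (N + α + β + 1)) * P = 0 := by
  set R := jacL α β P + Polynomial.C (N * (N + α + β + 1)) * P with hR
  have hc : ∀ k, N < k → P.coeff k = 0 := fun k hk =>
    Polynomial.coeff_eq_zero_of_natDegree_lt (by omega)
  have hlt : ∀ S : Polynomial ℝ, (∀ k, N ≤ k → S.coeff k = 0) → S.natDegree < N := by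
    intro S hS
    by_cases h0 : S = 0
    · simp [h0]; omega
    · exact (Polynomial.natDegree_lt_iff_degree_lt h0).2
        ((Polynomial.degree_lt_iff_coeff_zero _ _).2 (fun m hm => hS m hm))
  have hRc : ∀ k, N ≤ k → R.coeff k = 0 := by
    intro k hk
    simp only [hR, Polynomial.coeff_add, jacL_coeff, Polynomial.coeff_C_mul]
    rw [hc (k+1) (by omega), hc (k+2) (by omega)]
    rcases hk.eq_or_lt with rfl | h
    · ring
    · rw [hc k h]; ring
  have hLRc : ∀ k, N ≤ k → (jacL α β R).coeff k = 0 := by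
    intro k hk
    simp only [jacL_coeff, hRc _ hk, hRc (k+1) (by omega), hRc (k+2) (by omega)]
    ring
  have e1 := hPorth R (hlt R hRc)
  have e2 := hPorth _ (hlt _ hLRc)
  have e3 := jac_ibp α β hα hβ (P.derivative * R - P * R.derivative)
  have e4 : ∫ x in Set.Ioo (-1 : ℝ) 1, (R * R).eval x * (1 - x) ^ α * (1 + x) ^ β = 0 := by
    have i1 := jac_poly_integrableOn α β hα hβ (P * R)
    have i2 := jac_poly_integrableOn α β hα hβ (P * jacL α β R)
    have i3 := jac_poly_integrableOn α β hα hβ ((1 - Polynomial.X ^ 2) *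
       (P.derivative * R - P * R.derivative).derivative +
      (Polynomial.C (β - α) - Polynomial.C (α + β + 2) * Polynomial.X) *
       (P.derivative * R - P * R.derivative))
    simp only [Polynomial.eval_mul (p := P)] at i1 i2
    have : ∀ x, (R * R).eval x * (1 - x) ^ α * (1 + x) ^ β =
       (((1 - Polynomial.X ^ 2) *
       (P.derivative * R - P * R.derivative).derivative +
      (Polynomial.C (β - α) - Polynomial.C (α + β + 2) * Polynomial.X) *
       (P.derivative * R - P * R.derivative)).eval x * (1 - x) ^ α * (1 + x) ^ β +
        P.eval x * (jacL α β R).eval x * (1 - x) ^ α * (1 + x) ^ β) +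
       (N * (N + α + β + 1)) * (P.eval x * R.eval x * (1 - x) ^ α * (1 + x) ^ β) := by
      intro x
      have hRx : R.eval x = (1 - x ^ 2) * (P.derivative.derivative).eval x +
        (β - α - (α + β + 2) * x) * P.derivative.eval x + (N * (N + α + β + 1)) * P.eval x := by
        rw [hR, Polynomial.eval_add, jacL_eval]; simp
      have : (R * R).eval x = ((1 - x ^ 2) * (P.derivative.derivative).eval x +
        (β - α - (α + β + 2) * x) * P.derivative.eval x + (N * (N + α + β + 1)) * P.eval x) *
        R.eval x := by rw [Polynomial.eval_mul, ← hRx]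
      rw [this, jacL_eval]
      simp only [Polynomial.eval_add, Polynomial.eval_mul, Polynomial.eval_sub,
        Polynomial.derivative_sub, Polynomial.derivative_mul, Polynomial.eval_one,
        Polynomial.eval_pow, Polynomial.eval_X, Polynomial.eval_C]
      ring
    simp_rw [this]
    refine (integral_add (i3.add i2) (i1.const_mul _)).trans ?_
    simp only [Pi.add_apply]
    rw [integral_add i3 i2, integral_const_mul, e1, e2, e3]
    simp
  by_contra hne
  have hpos : ∀ x ∈ Set.Ioo (-1 : ℝ) 1, 0 < (1 - x) ^ α * (1 + x) ^ β := fun x hx =>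
    mul_pos (Real.rpow_pos_of_pos (by linarith [hx.2]) _) (Real.rpow_pos_of_pos (by linarith [hx.1]) _)
  rw [setIntegral_eq_zero_iff_of_nonneg_ae ?_ (jac_poly_integrableOn α β hα hβ _)] at e4
  · have hfin : (R.roots.toFinset : Set ℝ).Finite := Finset.finite_toSet _
    have h0 : (volume.restrict (Set.Ioo (-1:ℝ) 1)) (R.roots.toFinset : Set ℝ) = 0 :=
      hfin.measure_zero _
    have h1 : ∀ᵐ x ∂(volume.restrict (Set.Ioo (-1:ℝ) 1)), x ∉ (R.roots.toFinset : Set ℝ) :=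
      measure_eq_zero_iff_ae_notMem.1 h0
    have h2 : ∀ᵐ x ∂(volume.restrict (Set.Ioo (-1:ℝ) 1)), False := by
      filter_upwards [e4, h1, ae_restrict_mem measurableSet_Ioo] with x hx hx1 hx2
      apply hx1
      simp only [Polynomial.eval_mul, Pi.zero_apply, mul_assoc, mul_eq_zero] at hx
      have := hpos x hx2
      simp only [Finset.mem_coe, Multiset.mem_toFinset, Polynomial.mem_roots hne, Polynomial.IsRoot]
      by_contra hh
      rcases hx with h | h | h | h
      · exact hh h
      · exact hh h
      · simp [h] at this
      · simp [h] at this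
    rw [ae_iff] at h2
    simp at h2
    norm_num at h2
  · filter_upwards [ae_restrict_mem measurableSet_Ioo] with x hx
    have := hpos x hx
    simp only [Pi.zero_apply, Polynomial.eval_mul]
    have := mul_nonneg (mul_self_nonneg (R.eval x)) this.le
    linarith

/-- Values at the end points. -/
lemma jac_values (n : ℕ) : ∀ (α β : ℝ) (_ : -1 < α) (_ : -1 < β) (p : Polynomial ℝ)
    (_ : p.natDegree = n) (_ : jacL α β p + Polynomial.C (n * (n + α + β + 1)) * p = 0),
    p.eval 1 * (∏ j ∈ Finset.range n, ((n : ℝ) + α + β + 1 + j)) =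
      p.coeff n * 2 ^ n * (∏ j ∈ Finset.range n, (α + 1 + j)) ∧
    p.eval (-1) * (∏ j ∈ Finset.range n, ((n : ℝ) + α + β + 1 + j)) =
      p.coeff n * (-2) ^ n * (∏ j ∈ Finset.range n, (β + 1 + j)) := by
  induction n with
  | zero =>
    intro α β _ _ p hp _
    rw [Polynomial.eq_C_of_natDegree_eq_zero hp]
    simp
  | succ n ih =>
    intro α β hα hβ p hp hode
    have hode' : jacL (α + 1) (β + 1) p.derivative +
        Polynomial.C (n * (n + (α + 1) + (β + 1) + 1)) * p.derivative = 0 := by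
      have := congrArg Polynomial.derivative hode
      rw [← Polynomial.derivative_zero, ← this]
      unfold jacL
      simp only [Polynomial.derivative_add, Polynomial.derivative_mul, Polynomial.derivative_sub,
        Polynomial.derivative_one, Polynomial.derivative_C, Polynomial.derivative_X,
        Polynomial.derivative_X_pow]
      simp only [map_add, map_sub, map_mul, map_one, map_natCast, map_ofNat, Nat.cast_add, Nat.cast_one]
      norm_num
      ring
    have hd : p.derivative.natDegree = n := by
      rw [Polynomial.natDegree_derivative, hp]; rfl
    obtain ⟨i1, i2⟩ := ih (α + 1) (β + 1) (by linarith) (by linarith) p.derivative hd hode'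
    have v1 := congrArg (Polynomial.eval 1) hode
    have v2 := congrArg (Polynomial.eval (-1)) hode
    rw [Polynomial.eval_add, jacL_eval] at v1 v2
    simp only [Polynomial.eval_mul, Polynomial.eval_C, Polynomial.eval_zero] at v1 v2
    rw [Polynomial.coeff_derivative] at i1 i2
    have hn : (0:ℝ) < n + 1 := by positivity
    have q1 : ∏ j ∈ Finset.range (n+1), (((n+1 : ℕ) : ℝ) + α + β + 1 + j) =
       (∏ j ∈ Finset.range n, ((n : ℝ) + (α + 1) + (β + 1) + 1 + j)) * (n + 1 + α + β + 1) := by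
      rw [Finset.prod_range_succ']
      congr 1
      · apply Finset.prod_congr rfl; intro j _; push_cast; ring
      · push_cast; ring
    have q2 : ∀ γ : ℝ, ∏ j ∈ Finset.range (n+1), (γ + 1 + j) =
       (∏ j ∈ Finset.range n, (γ + 1 + 1 + j)) * (γ + 1) := by
      intro γ
      rw [Finset.prod_range_succ']
      congr 1
      · apply Finset.prod_congr rfl; intro j _; push_cast; ring
      · push_cast; ring
    rw [q1, q2, q2]
    push_cast at v1 v2
    constructor
    · apply mul_left_cancel₀ hn.ne'
      linear_combination (∏ j ∈ Finset.range n, ((n : ℝ) + (α + 1) + (β + 1) + 1 + j)) * v1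
        + 2 * (α + 1) * i1
    · apply mul_left_cancel₀ hn.ne'
      linear_combination (∏ j ∈ Finset.range n, ((n : ℝ) + (α + 1) + (β + 1) + 1 + j)) * v2
        - 2 * (β + 1) * i2

open scoped MatrixOrder Matrix.Norms.L2Operator in
lemma posDef_sqrt {N : ℕ} (H : Matrix (Fin N) (Fin N) ℝ) (hH : H.PosDef) :
    ∃ S : Matrix (Fin N) (Fin N) ℝ, S.transpose * S = H := by
  refine ⟨CFC.sqrt H, ?_⟩
  have h1 : IsSelfAdjoint (CFC.sqrt H) := (CFC.sqrt_nonneg H).isSelfAdjoint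
  have h2 : (CFC.sqrt H).transpose = CFC.sqrt H := by
    have := h1.star_eq
    rwa [Matrix.star_eq_conjTranspose, Matrix.conjTranspose_eq_transpose_of_trivial] at this
  rw [h2]
  exact CFC.sqrt_mul_sqrt_self H (Matrix.nonneg_iff_posSemidef.2 hH.posSemidef)

lemma std_gauss_int (N : ℕ) :
    ∫ y : Fin N → ℝ, Real.exp (-(1/2) * ∑ i, y i ^ 2) = (2 * π) ^ ((N : ℝ) / 2) := by
  have : ∀ y : Fin N → ℝ, Real.exp (-(1/2) * ∑ i, y i ^ 2) = ∏ i, Real.exp (-(1/2) * y i ^ 2) := by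
    intro y; rw [← Real.exp_sum, Finset.mul_sum]
  simp_rw [this]
  rw [integral_fintype_prod_volume_eq_pow (fun x : ℝ => Real.exp (-(1/2) * x ^ 2)), integral_gaussian]
  rw [Fintype.card_fin, Real.sqrt_eq_rpow, ← Real.rpow_natCast, ← Real.rpow_mul (by positivity)]
  congr 1 <;> ring

lemma gauss_int {N : ℕ} (H : Matrix (Fin N) (Fin N) ℝ) (hH : H.PosDef) :
    ∫ y : Fin N → ℝ, Real.exp (-(1/2) * (y ⬝ᵥ (H.mulVec y))) =
      (2 * π) ^ ((N : ℝ) / 2) / √H.det := by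
  obtain ⟨S, hS⟩ := posDef_sqrt H hH
  have hdet : H.det = S.det ^ 2 := by rw [← hS, Matrix.det_mul, Matrix.det_transpose]; ring
  have hSdet : S.det ≠ 0 := by
    intro h; have := hH.det_pos; rw [hdet, h] at this; simp at this
  have h1 : ∀ y : Fin N → ℝ, Real.exp (-(1/2) * (y ⬝ᵥ (H.mulVec y))) =
      (fun u : Fin N → ℝ => Real.exp (-(1/2) * ∑ i, u i ^ 2)) (Matrix.toLin' S y) := by
    intro y
    rw [← hS, ← Matrix.mulVec_mulVec, Matrix.dotProduct_mulVec, Matrix.vecMul_transpose]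
    simp [dotProduct, pow_two, Matrix.toLin'_apply]
  simp_rw [h1]
  rw [← integral_map (μ := volume) (φ := Matrix.toLin' S)
    (f := fun u : Fin N → ℝ => Real.exp (-(1/2) * ∑ i, u i ^ 2))]
  · rw [Real.map_matrix_volume_pi_eq_smul_volume_pi hSdet, integral_smul_measure, std_gauss_int,
      hdet, Real.sqrt_sq_eq_abs, ENNReal.toReal_ofReal (abs_nonneg _), abs_inv, smul_eq_mul]
    field_simp
  · exact ((Matrix.toLin' S).continuous_on_pi).aemeasurable
  · apply Continuous.aestronglyMeasurable
    fun_prop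

lemma gauss_integrable (N : ℕ) (c : ℝ) (hc : 0 < c) :
    Integrable (fun y : Fin N → ℝ => Real.exp (-c * ∑ i, y i ^ 2)) := by
  have : ∀ y : Fin N → ℝ, Real.exp (-c * ∑ i, y i ^ 2) = ∏ i, Real.exp (-c * y i ^ 2) := by
    intro y; rw [← Real.exp_sum, Finset.mul_sum]
  simp_rw [this]
  exact Integrable.fintype_prod (f := fun _ x => Real.exp (-c * x ^ 2))
    (fun _ => integrable_exp_neg_mul_sq hc)

lemma laplace_lemma {N : ℕ} (H : Matrix (Fin N) (Fin N) ℝ) (hH : H.PosDef) (z : Fin N → ℝ)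
    (F : ℝ → (Fin N → ℝ) → ℝ) (hmeas : ∀ κ, Measurable (F κ)) (C c G : ℝ) (hc : 0 < c)
    (hb : ∀ᶠ κ in atTop, ∀ x, |F κ x| ≤ C * Real.exp (-(c * κ) * ∑ i, (x i - z i) ^ 2))
    (hlim : ∀ y : Fin N → ℝ, Tendsto (fun κ : ℝ => F κ (z + (√κ)⁻¹ • y)) atTop
      (𝓝 (G * Real.exp (-(1/2) * (y ⬝ᵥ (H.mulVec y)))))) :
    Tendsto (fun κ : ℝ => κ ^ ((N : ℝ) / 2) * ∫ x, F κ x) atTop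
      (𝓝 (G * ((2 * π) ^ ((N : ℝ) / 2) / √H.det))) := by
  have key : Tendsto (fun κ : ℝ => ∫ y, F κ (z + (√κ)⁻¹ • y)) atTop
      (𝓝 (∫ y : Fin N → ℝ, G * Real.exp (-(1/2) * (y ⬝ᵥ (H.mulVec y))))) := by
    apply tendsto_integral_filter_of_dominated_convergence
      (fun y : Fin N → ℝ => C * Real.exp (-c * ∑ i, y i ^ 2))
    · filter_upwards with κ
      exact ((hmeas κ).comp (by fun_prop)).aestronglyMeasurable
    · filter_upwards [hb, eventually_gt_atTop 0] with κ hκ h0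
      filter_upwards with y
      refine (hκ _).trans (le_of_eq ?_)
      congr 2
      have : ∀ i, ((z + (√κ)⁻¹ • y) i - z i) ^ 2 = κ⁻¹ * y i ^ 2 := by
        intro i
        simp [mul_pow, Real.sq_sqrt h0.le]
      simp_rw [this, ← Finset.mul_sum]
      field_simp
    · exact (gauss_integrable N c hc).const_mul C
    · filter_upwards with y using hlim y
  rw [integral_const_mul, gauss_int H hH] at key
  refine key.congr' ?_
  filter_upwards [eventually_gt_atTop 0] with κ h0
  rw [Measure.integral_comp_inv_smul_of_nonneg volume (fun x => F κ (z + x)) (Real.sqrt_nonneg κ),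
    integral_add_left_eq_self]
  simp only [Module.finrank_fintype_fun_eq_card, Fintype.card_fin, smul_eq_mul]
  rw [Real.sqrt_eq_rpow, ← Real.rpow_natCast, ← Real.rpow_mul h0.le]
  congr 2; ring

/-- Strong concavity of the logarithm on `(0, 2]`. -/
lemma log_strong (t t₀ : ℝ) (ht : 0 < t) (ht2 : t ≤ 2) (h0 : 0 < t₀) (h02 : t₀ ≤ 2) :
    Real.log t ≤ Real.log t₀ + (t - t₀) / t₀ - (t - t₀) ^ 2 / 8 := by
  have hd : ∀ u ∈ Set.Ioc (0:ℝ) 2, HasDerivAt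
      (fun u => (u - t₀) / t₀ - (u - t₀) ^ 2 / 8 - Real.log u)
      ((u - t₀) * (1 / (u * t₀) - 1 / 4)) u := by
    intro u hu
    have hu0 := hu.1.ne'
    have h1 : HasDerivAt (fun u : ℝ => (u - t₀) / t₀) (1 / t₀) u :=
      ((hasDerivAt_id u).sub_const t₀).div_const t₀
    have h2 : HasDerivAt (fun u : ℝ => (u - t₀) ^ 2 / 8) ((2 : ℕ) * (u - t₀) ^ (2 - 1) * 1 / 8) u :=
      (((hasDerivAt_id u).sub_const t₀).pow 2).div_const 8
    refine ((h1.sub h2).sub (Real.hasDerivAt_log hu0)).congr_deriv ?_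
    field_simp
    norm_num
    ring
  have hfac : ∀ u ∈ Set.Ioc (0:ℝ) 2, 0 ≤ 1 / (u * t₀) - 1 / 4 := by
    intro u hu
    have : 1 / 4 ≤ 1 / (u * t₀) := by
      apply one_div_le_one_div_of_le (mul_pos hu.1 h0)
      nlinarith [hu.1, hu.2]
    linarith
  rcases le_total t t₀ with h | h
  · have hanti : AntitoneOn (fun u => (u - t₀) / t₀ - (u - t₀) ^ 2 / 8 - Real.log u) (Set.Icc t t₀) := by
      apply antitoneOn_of_deriv_nonpos (convex_Icc _ _)
      · intro u hu
        exact (hd u ⟨by linarith [hu.1], by linarith [hu.2]⟩).continuousAt.continuousWithinAt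
      · intro u hu
        rw [interior_Icc] at hu
        exact (hd u ⟨by linarith [hu.1], by linarith [hu.2]⟩).differentiableAt.differentiableWithinAt
      · intro u hu
        rw [interior_Icc] at hu
        have hm : u ∈ Set.Ioc (0:ℝ) 2 := ⟨by linarith [hu.1], by linarith [hu.2]⟩
        rw [(hd u hm).deriv]
        exact mul_nonpos_of_nonpos_of_nonneg (by linarith [hu.2]) (hfac u hm)
    have := hanti (Set.left_mem_Icc.2 h) (Set.right_mem_Icc.2 h) h
    simp at this
    linarith
  · have hmono : MonotoneOn (fun u => (u - t₀) / t₀ - (u - t₀) ^ 2 / 8 - Real.log u) (Set.Icc t₀ t) := by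
      apply monotoneOn_of_deriv_nonneg (convex_Icc _ _)
      · intro u hu
        exact (hd u ⟨by linarith [hu.1], by linarith [hu.2]⟩).continuousAt.continuousWithinAt
      · intro u hu
        rw [interior_Icc] at hu
        exact (hd u ⟨by linarith [hu.1], by linarith [hu.2]⟩).differentiableAt.differentiableWithinAt
      · intro u hu
        rw [interior_Icc] at hu
        have hm : u ∈ Set.Ioc (0:ℝ) 2 := ⟨by linarith [hu.1], by linarith [hu.2]⟩
        rw [(hd u hm).deriv]
        exact mul_nonneg (by linarith [hu.1]) (hfac u hm)
    have := hmono (Set.left_mem_Icc.2 h) (Set.right_mem_Icc.2 h) h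
    simp at this
    linarith

/-- Second order expansion of the logarithm along the scaling `κ^{-1/2}`. -/
lemma log_second_order (t₀ d : ℝ) (h0 : 0 < t₀) :
    Tendsto (fun κ : ℝ => κ * (Real.log (t₀ + (√κ)⁻¹ * d) - Real.log t₀ - (√κ)⁻¹ * d / t₀)) atTop
      (𝓝 (-(1/2) * (d ^ 2 / t₀ ^ 2))) := by
  have hs : Tendsto (fun κ : ℝ => (√κ)⁻¹) atTop (𝓝 0) :=
    tendsto_inv_atTop_zero.comp Real.tendsto_sqrt_atTop
  have hu : Tendsto (fun κ : ℝ => -((√κ)⁻¹ * d / t₀)) atTop (𝓝 0) := by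
    simpa using ((hs.mul_const d).div_const t₀).neg
  have hbound : Tendsto (fun κ : ℝ => κ * (|-((√κ)⁻¹ * d / t₀)| ^ 3 / (1 - |-((√κ)⁻¹ * d / t₀)|)))
      atTop (𝓝 0) := by
    have e1 : Tendsto (fun κ : ℝ => (√κ)⁻¹ * (|d / t₀| ^ 3 / (1 - |-((√κ)⁻¹ * d / t₀)|))) atTop
        (𝓝 (0 * (|d / t₀| ^ 3 / (1 - |0|)))) := by
      apply hs.mul
      apply Tendsto.div tendsto_const_nhds (tendsto_const_nhds.sub hu.abs)
      simp
    rw [zero_mul] at e1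
    refine e1.congr' ?_
    filter_upwards [eventually_gt_atTop 0] with κ hκ
    have hsq : √κ ^ 2 = κ := Real.sq_sqrt hκ.le
    have hp : 0 < √κ := Real.sqrt_pos.2 hκ
    have : |-((√κ)⁻¹ * d / t₀)| = (√κ)⁻¹ * |d / t₀| := by
      rw [abs_neg, mul_div_assoc, abs_mul, abs_of_pos (inv_pos.2 hp)]
    nth_rewrite 3 [← hsq]
    rw [this]
    field_simp
  have hev : ∀ᶠ κ : ℝ in atTop, |-((√κ)⁻¹ * d / t₀)| < 1 := by
    have := hu.abs
    simp only [abs_zero] at this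
    exact this.eventually (gt_mem_nhds one_pos)
  rw [tendsto_iff_norm_sub_tendsto_zero]
  refine squeeze_zero' (Eventually.of_forall fun _ => norm_nonneg _) ?_ hbound
  filter_upwards [hev, eventually_gt_atTop 0] with κ hκ hκ0
  have h := Real.abs_log_sub_add_sum_range_le hκ 2
  have hsq : √κ ^ 2 = κ := Real.sq_sqrt hκ0.le
  have hp : 0 < √κ := Real.sqrt_pos.2 hκ0
  have hlog : Real.log (t₀ + (√κ)⁻¹ * d) - Real.log t₀ = Real.log (1 - -((√κ)⁻¹ * d / t₀)) := by
    have h1 : 0 < 1 - -((√κ)⁻¹ * d / t₀) := by linarith [(abs_lt.1 hκ).2]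
    have : t₀ + (√κ)⁻¹ * d = t₀ * (1 - -((√κ)⁻¹ * d / t₀)) := by field_simp; ring
    rw [this, Real.log_mul h0.ne' h1.ne']; ring
  rw [hlog, Real.norm_eq_abs]
  calc _ = |κ * ((∑ i ∈ range 2, (-((√κ)⁻¹ * d / t₀)) ^ (i + 1) / (↑i + 1)) +
        Real.log (1 - -((√κ)⁻¹ * d / t₀)))| := by
        congr 1
        simp only [Finset.sum_range_succ, Finset.sum_range_zero]
        have : κ * (((√κ)⁻¹ * d / t₀) ^ 2 / 2) = 1 / 2 * (d ^ 2 / t₀ ^ 2) := by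
          nth_rewrite 1 [← hsq]
          field_simp
        push_cast
        linear_combination -this
    _ = κ * _ := by rw [abs_mul, abs_of_pos hκ0]
    _ ≤ _ := mul_le_mul_of_nonneg_left h hκ0.le

/-- Hessian of `-log φ` at `z`. -/
noncomputable def jacHess {N : ℕ} (A B : ℝ) (z : Fin N → ℝ) : Matrix (Fin N) (Fin N) ℝ :=
  Matrix.of fun i j => if i = j then
    (∑ l ∈ univ.erase i, 1 / (z i - z l) ^ 2) + A / (1 - z i) ^ 2 + B / (1 + z i) ^ 2
    else -(1 / (z i - z j) ^ 2)

lemma prod_deriv_eval {ι : Type*} [DecidableEq ι] (z : ι → ℝ) (x : ℝ) (s : Finset ι)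
    (hx : ∀ l ∈ s, x ≠ z l) :
    (Polynomial.derivative (∏ l ∈ s, (Polynomial.X - Polynomial.C (z l)))).eval x =
      (∏ l ∈ s, (x - z l)) * ∑ l ∈ s, 1 / (x - z l) ∧
    (Polynomial.derivative (Polynomial.derivative
      (∏ l ∈ s, (Polynomial.X - Polynomial.C (z l))))).eval x =
      (∏ l ∈ s, (x - z l)) * ((∑ l ∈ s, 1 / (x - z l)) ^ 2 - ∑ l ∈ s, 1 / (x - z l) ^ 2) := by
  induction s using Finset.induction_on with
  | empty => simp
  | insert i s hi ih =>
    obtain ⟨h1, h2⟩ := ih (fun l hl => hx l (Finset.mem_insert_of_mem hl))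
    have hne : x - z i ≠ 0 := sub_ne_zero.2 (hx i (Finset.mem_insert_self _ _))
    have hev : (∏ l ∈ s, (Polynomial.X - Polynomial.C (z l))).eval x = ∏ l ∈ s, (x - z l) := by
      simp [Polynomial.eval_prod]
    rw [Finset.prod_insert hi, Finset.prod_insert hi, Finset.sum_insert hi, Finset.sum_insert hi]
    simp only [Polynomial.derivative_mul, Polynomial.derivative_add, Polynomial.derivative_sub,
      Polynomial.derivative_X,
      Polynomial.derivative_C, Polynomial.eval_add, Polynomial.eval_mul, Polynomial.eval_sub,
      Polynomial.eval_X, Polynomial.eval_C, sub_zero, one_mul, h1, h2, hev, Polynomial.eval_one]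
    constructor
    · field_simp
    · field_simp
      ring

section Det
variable {N : ℕ} (z : Fin N → ℝ)

/-- The product of all linear factors but one. -/
noncomputable def pj (j : Fin N) : Polynomial ℝ :=
  ∏ l ∈ univ.erase j, (Polynomial.X - Polynomial.C (z l))

lemma pj_mul (j : Fin N) : (Polynomial.X - Polynomial.C (z j)) * pj z j =
    ∏ l, (Polynomial.X - Polynomial.C (z l)) :=
  Finset.mul_prod_erase univ (fun l => Polynomial.X - Polynomial.C (z l)) (Finset.mem_univ j)

lemma pj_eval_ne {i j : Fin N} (h : i ≠ j) : (pj z j).eval (z i) = 0 := by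
  unfold pj
  rw [Polynomial.eval_prod]
  apply Finset.prod_eq_zero (i := i)
  · simp [h]
  · simp

lemma pj_eval_self (j : Fin N) : (pj z j).eval (z j) = ∏ l ∈ univ.erase j, (z j - z l) := by
  simp [pj, Polynomial.eval_prod]

lemma pj_natDegree (j : Fin N) : (pj z j).natDegree < N := by
  unfold pj
  rw [Polynomial.natDegree_prod_of_monic _ _ (fun l _ => Polynomial.monic_X_sub_C _)]
  have : 0 < N := lt_of_le_of_lt (Nat.zero_le _) j.2
  simp; omega

lemma pj_self_ne (hz : Function.Injective z) (j : Fin N) : ∏ l ∈ univ.erase j, (z j - z l) ≠ 0 := by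
  apply Finset.prod_ne_zero_iff.2
  intro l hl
  exact sub_ne_zero.2 (fun h => (Finset.ne_of_mem_erase hl) (hz h).symm)

lemma pj_derivs (hz : Function.Injective z) (j : Fin N) :
    (Polynomial.derivative (pj z j)).eval (z j) =
      (∏ l ∈ univ.erase j, (z j - z l)) * ∑ l ∈ univ.erase j, 1 / (z j - z l) ∧
    (Polynomial.derivative (Polynomial.derivative (pj z j))).eval (z j) =
      (∏ l ∈ univ.erase j, (z j - z l)) * ((∑ l ∈ univ.erase j, 1 / (z j - z l)) ^ 2
        - ∑ l ∈ univ.erase j, 1 / (z j - z l) ^ 2) := by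
  apply prod_deriv_eval
  intro l hl h
  exact (Finset.ne_of_mem_erase hl) (hz h).symm

lemma jac_equil (hz : Function.Injective z) (α β : ℝ) (cN : ℝ)
    (hode : jacL α β (∏ l, (Polynomial.X - Polynomial.C (z l))) +
      Polynomial.C cN * (∏ l, (Polynomial.X - Polynomial.C (z l))) = 0)
    (i : Fin N) :
    2 * (1 - z i ^ 2) * (∑ l ∈ univ.erase i, 1 / (z i - z l)) + (β - α - (α + β + 2) * z i) = 0 := by
  have h := congrArg (Polynomial.eval (z i)) hode
  rw [Polynomial.eval_add, jacL_eval, ← pj_mul z i] at h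
  obtain ⟨h1, h2⟩ := pj_derivs z hz i
  have hne := pj_self_ne z hz i
  have h3 := pj_eval_self z i
  generalize (∑ l ∈ univ.erase i, 1 / (z i - z l)) = S at *
  generalize (∏ l ∈ univ.erase i, (z i - z l)) = D at *
  simp [h1, h3] at h
  apply mul_left_cancel₀ hne
  linear_combination h

lemma jac_K_poly (hz : Function.Injective z) (α β : ℝ) (cN : ℝ)
    (hode : jacL α β (∏ l, (Polynomial.X - Polynomial.C (z l))) +
      Polynomial.C cN * (∏ l, (Polynomial.X - Polynomial.C (z l))) = 0)
    (j : Fin N) :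
    (Polynomial.X - Polynomial.C (z j)) * (jacL α β (pj z j) + Polynomial.C cN * pj z j) =
    -2 * (1 - Polynomial.X ^ 2) * Polynomial.derivative (pj z j) -
     (Polynomial.C (β - α) - Polynomial.C (α + β + 2) * Polynomial.X) * pj z j := by
  rw [← pj_mul z j] at hode
  unfold jacL at *
  simp only [Polynomial.derivative_mul, Polynomial.derivative_add, Polynomial.derivative_sub,
      Polynomial.derivative_X, Polynomial.derivative_C, sub_zero, one_mul] at hode
  linear_combination hode

lemma jac_K_eval (hz : Function.Injective z) (α β : ℝ) (cN : ℝ)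
    (hode : jacL α β (∏ l, (Polynomial.X - Polynomial.C (z l))) +
      Polynomial.C cN * (∏ l, (Polynomial.X - Polynomial.C (z l))) = 0)
    (hzm : ∀ i, z i ∈ Set.Ioo (-1 : ℝ) 1) (i j : Fin N) :
    (jacL α β (pj z j) + Polynomial.C cN * pj z j).eval (z i) =
      2 * (1 - z i ^ 2) * (∏ l ∈ univ.erase i, (z i - z l)) *
       jacHess ((α + 1) / 2) ((β + 1) / 2) z i j := by
  have h := jac_K_poly z hz α β cN hode j
  by_cases hij : i = j
  · subst hij
    have h' := congrArg (fun q => Polynomial.eval (z i) (Polynomial.derivative q)) h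
    obtain ⟨h1, h2⟩ := pj_derivs z hz i
    have he := jac_equil z hz α β cN hode i
    set K := jacL α β (pj z i) + Polynomial.C cN * pj z i with hK
    set S1 := ∑ l ∈ univ.erase i, 1 / (z i - z l) with hS1
    set S2 := ∑ l ∈ univ.erase i, 1 / (z i - z l) ^ 2 with hS2
    set D := ∏ l ∈ univ.erase i, (z i - z l) with hD
    have hev := pj_eval_self z i
    have hneg : (-2 : Polynomial ℝ) = Polynomial.C (-2) := by rw [Polynomial.C_neg]; rfl
    rw [hneg] at h'
    simp only [Polynomial.derivative_mul, Polynomial.derivative_sub, Polynomial.derivative_X,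
      Polynomial.derivative_C, Polynomial.derivative_one, Polynomial.derivative_X_pow,
      Polynomial.eval_add, Polynomial.eval_sub, Polynomial.eval_mul, Polynomial.eval_X,
      Polynomial.eval_C, Polynomial.eval_one, Polynomial.eval_zero, Polynomial.eval_pow,
      h1, h2, hev] at h'
    have hp : 1 - z i ≠ 0 := by linarith [(hzm i).2]
    have hm : 1 + z i ≠ 0 := by linarith [(hzm i).1]
    have hH : jacHess ((α + 1) / 2) ((β + 1) / 2) z i i =
        S2 + (α + 1) / 2 / (1 - z i) ^ 2 + (β + 1) / 2 / (1 + z i) ^ 2 := by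
      simp [jacHess, hS2]
    have hq : 2 * (1 - z i ^ 2) * ((α + 1) / 2 / (1 - z i) ^ 2 + (β + 1) / 2 / (1 + z i) ^ 2)
        = 4 * z i * S1 + (α + β + 2) := by
      have h12 : (1 - z i ^ 2) ≠ 0 := by
        have : 1 - z i ^ 2 = (1 - z i) * (1 + z i) := by ring
        rw [this]; exact mul_ne_zero hp hm
      have hS : S1 = -(β - α - (α + β + 2) * z i) / (2 * (1 - z i ^ 2)) := by
        field_simp; linear_combination he
      rw [hS]
      have : 1 - z i ^ 2 = (1 - z i) * (1 + z i) := by ring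
      rw [this]
      field_simp
      ring
    rw [hH]
    simp at h'
    linear_combination h' - D * hq - D * S1 * he
  · have h' := congrArg (Polynomial.eval (z i)) h
    have hd : (z i - z j) * (Polynomial.derivative (pj z j)).eval (z i) =
        ∏ l ∈ univ.erase i, (z i - z l) := by
      have e := congrArg (fun q => Polynomial.eval (z i) (Polynomial.derivative q))
        ((pj_mul z j).trans (pj_mul z i).symm)
      simp [pj_eval_ne z hij, pj_eval_self] at e
      exact e
    have hne : z i - z j ≠ 0 := sub_ne_zero.2 (fun h => hij (hz h))
    have hH : jacHess ((α + 1) / 2) ((β + 1) / 2) z i j = -(1 / (z i - z j) ^ 2) := by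
      simp [jacHess, hij]
    rw [hH, ← hd]
    simp only [Polynomial.eval_mul, Polynomial.eval_sub, Polynomial.eval_X, Polynomial.eval_C,
      pj_eval_ne z hij, Polynomial.eval_pow, Polynomial.eval_one, Polynomial.eval_neg,
      Polynomial.eval_ofNat] at h'
    field_simp
    linear_combination h'

lemma sum_ite_coeff (q : Polynomial ℝ) (hq : q.natDegree < N) (n : ℕ) :
    ∑ k : Fin N, (if n = (k : ℕ) then (1:ℝ) else 0) * q.coeff k = q.coeff n := by
  rw [Fin.sum_univ_eq_sum_range (fun k => (if n = k then (1:ℝ) else 0) * q.coeff k) N]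
  simp only [ite_mul, one_mul, zero_mul, Finset.sum_ite_eq, Finset.mem_range]
  split_ifs with h
  · rfl
  · exact (Polynomial.coeff_eq_zero_of_natDegree_lt (by omega)).symm

lemma eval_eq_fin_sum (q : Polynomial ℝ) (hq : q.natDegree < N) (x : ℝ) :
    q.eval x = ∑ k : Fin N, x ^ (k : ℕ) * q.coeff k := by
  rw [Polynomial.eval_eq_sum_range' hq, Fin.sum_univ_eq_sum_range (fun k => x ^ k * q.coeff k) N]
  exact Finset.sum_congr rfl fun _ _ => mul_comm _ _

lemma jac_det (hz : Function.Injective z) (α β : ℝ) (cN : ℝ)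
    (hode : jacL α β (∏ l, (Polynomial.X - Polynomial.C (z l))) +
      Polynomial.C cN * (∏ l, (Polynomial.X - Polynomial.C (z l))) = 0)
    (hzm : ∀ i, z i ∈ Set.Ioo (-1 : ℝ) 1) :
    2 ^ N * (∏ i, (1 - z i ^ 2)) * (jacHess ((α + 1) / 2) ((β + 1) / 2) z).det =
      ∏ k ∈ Finset.range N, (cN - k * (k + α + β + 1)) := by
  let V : Matrix (Fin N) (Fin N) ℝ := Matrix.of fun i k => z i ^ (k : ℕ)
  let U : Matrix (Fin N) (Fin N) ℝ := Matrix.of fun m k =>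
    (m + 2) * (m + 1) * (if (m : ℕ) + 2 = k then (1:ℝ) else 0) +
    (β - α) * (m + 1) * (if (m : ℕ) + 1 = k then (1:ℝ) else 0) +
    (cN - m * (m + α + β + 1)) * (if (m : ℕ) = k then (1:ℝ) else 0)
  let Cm : Matrix (Fin N) (Fin N) ℝ := Matrix.of fun k j => (pj z j).coeff k
  let D : Fin N → ℝ := fun i => ∏ l ∈ univ.erase i, (z i - z l)
  have hVC : V * Cm = Matrix.diagonal D := by
    ext i j
    rw [Matrix.mul_apply]
    simp only [V, Cm, Matrix.of_apply]
    rw [← eval_eq_fin_sum _ (pj_natDegree z j)]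
    by_cases h : i = j
    · subst h; simp [pj_eval_self, D]
    · rw [pj_eval_ne z h, Matrix.diagonal_apply_ne _ h]
  have hVUC : V * (U * Cm) = Matrix.diagonal (fun i => 2 * (1 - z i ^ 2) * D i) *
      jacHess ((α + 1) / 2) ((β + 1) / 2) z := by
    ext i j
    rw [Matrix.diagonal_mul, Matrix.mul_apply]
    rw [← jac_K_eval z hz α β cN hode hzm i j]
    have hqd := pj_natDegree z j
    have hKd : (jacL α β (pj z j) + Polynomial.C cN * pj z j).natDegree < N := by
      have hN : 0 < N := lt_of_le_of_lt (Nat.zero_le _) j.2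
      have hc : ∀ k, N ≤ k → (pj z j).coeff k = 0 := fun k hk =>
        Polynomial.coeff_eq_zero_of_natDegree_lt (by omega)
      by_cases h0 : jacL α β (pj z j) + Polynomial.C cN * pj z j = 0
      · rw [h0]; simpa using hN
      rw [Polynomial.natDegree_lt_iff_degree_lt h0, Polynomial.degree_lt_iff_coeff_zero]
      intro k hk
      rw [Polynomial.coeff_add, jacL_coeff, Polynomial.coeff_C_mul, hc k hk, hc (k+1) (by omega),
        hc (k+2) (by omega)]
      ring
    rw [eval_eq_fin_sum _ hKd]
    apply Finset.sum_congr rfl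
    intro m _
    simp only [V, Matrix.of_apply]
    congr 1
    rw [Matrix.mul_apply, Polynomial.coeff_add, jacL_coeff, Polynomial.coeff_C_mul]
    simp only [U, Cm, Matrix.of_apply]
    simp only [add_mul, Finset.sum_add_distrib]
    simp only [mul_assoc _ (ite _ _ _) _, ← Finset.mul_sum]
    rw [sum_ite_coeff _ hqd, sum_ite_coeff _ hqd, sum_ite_coeff _ hqd]
    ring
  have hU : U.det = ∏ k ∈ Finset.range N, (cN - k * (k + α + β + 1)) := by
    rw [Matrix.det_of_isUpperTriangular]
    · rw [← Fin.prod_univ_eq_prod_range (fun k : ℕ => (cN - k * (k + α + β + 1))) N]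
      apply Finset.prod_congr rfl
      intro k _
      simp [U]
    · intro m k hmk
      have hmk' : (k : ℕ) < m := hmk
      simp only [U, Matrix.of_apply]
      rw [if_neg (by omega), if_neg (by omega), if_neg (by omega)]
      simp
  have hD : ∏ i, D i ≠ 0 := Finset.prod_ne_zero_iff.2 fun i _ => pj_self_ne z hz i
  have e1 := congrArg Matrix.det hVC
  have e2 := congrArg Matrix.det hVUC
  simp only [Matrix.det_mul, Matrix.det_diagonal, Finset.prod_mul_distrib, Finset.prod_const,
    Finset.card_univ, Fintype.card_fin] at e1 e2
  rw [← hU]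
  apply mul_left_cancel₀ hD
  linear_combination -e2 + U.det * e1

end Det

lemma prod_eigen (N : ℕ) (s : ℝ) :
    ∏ k ∈ Finset.range N, ((N : ℝ) * (N + s) - k * (k + s)) =
      N.factorial * ∏ j ∈ Finset.range N, ((N : ℝ) + s + j) := by
  have h : (N.factorial : ℝ) = ∏ k ∈ Finset.range N, ((N : ℝ) - k) := by
    rw [← Nat.descFactorial_self, Nat.descFactorial_eq_prod_range]
    push_cast
    apply Finset.prod_congr rfl
    intro k hk
    rw [Nat.cast_sub (Finset.mem_range.1 hk).le]
  rw [h, ← Finset.prod_mul_distrib]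
  apply Finset.prod_congr rfl
  intro k _
  ring

/-- Ordered pairs `i < j`. -/
def prs (N : ℕ) : Finset (Fin N × Fin N) :=
  Finset.univ.filter (fun p : Fin N × Fin N => p.1 < p.2)

lemma mem_prs {N : ℕ} (p : Fin N × Fin N) : p ∈ prs N ↔ p.1 < p.2 := by simp [prs]

lemma pair_sum {N : ℕ} (h : Fin N → Fin N → ℝ) :
    ∑ p ∈ prs N, (h p.1 p.2 + h p.2 p.1) = ∑ i, ∑ l ∈ univ.erase i, h i l := by
  have e1 : ∀ i : Fin N, ∑ l ∈ univ.erase i, h i l =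
      ∑ l, ((if i < l then h i l else 0) + (if l < i then h i l else 0)) := by
    intro i
    rw [← Finset.add_sum_erase univ _ (Finset.mem_univ i)]
    simp only [lt_self_iff_false, if_false, add_zero, zero_add]
    apply Finset.sum_congr rfl
    intro l hl
    rcases lt_or_gt_of_ne (Finset.ne_of_mem_erase hl) with h1 | h1
    · simp [h1, h1.not_gt]
    · simp [h1, h1.not_gt]
  simp_rw [e1, Finset.sum_add_distrib]
  congr 1
  · rw [prs, Finset.sum_filter, Fintype.sum_prod_type]
  · rw [prs, Finset.sum_filter, Fintype.sum_prod_type, Finset.sum_comm]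

/-- The logarithm of `φ` in the open alcove. -/
noncomputable def lphi {N : ℕ} (A B : ℝ) (x : Fin N → ℝ) : ℝ :=
  (∑ p ∈ prs N, Real.log (x p.2 - x p.1)) + ∑ i, (A * Real.log (1 - x i) + B * Real.log (1 + x i))

/-- The open alcove. -/
def oalc (N : ℕ) : Set (Fin N → ℝ) := {x | StrictMono x ∧ ∀ i, x i ∈ Set.Ioo (-1 : ℝ) 1}

lemma oalc_pair {N : ℕ} {x : Fin N → ℝ} (hx : x ∈ oalc N) {p : Fin N × Fin N} (hp : p ∈ prs N) :
    0 < x p.2 - x p.1 ∧ x p.2 - x p.1 ≤ 2 :=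
  ⟨by linarith [hx.1 ((mem_prs p).1 hp)], by linarith [(hx.2 p.2).2, (hx.2 p.1).1]⟩

lemma oalc_m {N : ℕ} {x : Fin N → ℝ} (hx : x ∈ oalc N) (i : Fin N) :
    0 < 1 - x i ∧ 1 - x i ≤ 2 := ⟨by linarith [(hx.2 i).2], by linarith [(hx.2 i).1]⟩

lemma oalc_p {N : ℕ} {x : Fin N → ℝ} (hx : x ∈ oalc N) (i : Fin N) :
    0 < 1 + x i ∧ 1 + x i ≤ 2 := ⟨by linarith [(hx.2 i).1], by linarith [(hx.2 i).2]⟩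

lemma first_order {N : ℕ} (A B : ℝ) (z : Fin N → ℝ) (hz : z ∈ oalc N)
    (heq : ∀ i, (∑ l ∈ univ.erase i, 1 / (z i - z l)) - A / (1 - z i) + B / (1 + z i) = 0)
    (v : Fin N → ℝ) :
    (∑ p ∈ prs N, (v p.2 - v p.1) / (z p.2 - z p.1)) +
      ∑ i, (A * (-v i / (1 - z i)) + B * (v i / (1 + z i))) = 0 := by
  have h1 : ∑ p ∈ prs N, (v p.2 - v p.1) / (z p.2 - z p.1) =
      ∑ i, ∑ l ∈ univ.erase i, v i * (1 / (z i - z l)) := by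
    rw [← pair_sum (fun i l => v i * (1 / (z i - z l)))]
    apply Finset.sum_congr rfl
    intro p hp
    have := (oalc_pair hz hp).1
    have h2 : z p.1 - z p.2 = -(z p.2 - z p.1) := by ring
    rw [h2]
    field_simp
    ring
  rw [h1, ← Finset.sum_add_distrib]
  apply Finset.sum_eq_zero
  intro i _
  rw [← Finset.mul_sum]
  linear_combination v i * heq i

lemma quad_form {N : ℕ} (A B : ℝ) (z : Fin N → ℝ) (hz : z ∈ oalc N) (y : Fin N → ℝ) :
    y ⬝ᵥ ((jacHess A B z).mulVec y) = (∑ p ∈ prs N, (y p.2 - y p.1) ^ 2 / (z p.2 - z p.1) ^ 2) +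
      ∑ i, (A * ((-y i) ^ 2 / (1 - z i) ^ 2) + B * (y i ^ 2 / (1 + z i) ^ 2)) := by
  have h1 : ∑ p ∈ prs N, (y p.2 - y p.1) ^ 2 / (z p.2 - z p.1) ^ 2 =
      ∑ i, ∑ l ∈ univ.erase i, (y i ^ 2 - y i * y l) * (1 / (z i - z l) ^ 2) := by
    rw [← pair_sum (fun i l => (y i ^ 2 - y i * y l) * (1 / (z i - z l) ^ 2))]
    apply Finset.sum_congr rfl
    intro p hp
    have := (oalc_pair hz hp).1
    have h2 : (z p.1 - z p.2) ^ 2 = (z p.2 - z p.1) ^ 2 := by ring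
    rw [h2]
    field_simp
    ring
  rw [h1, ← Finset.sum_add_distrib, dotProduct]
  apply Finset.sum_congr rfl
  intro i _
  rw [Matrix.mulVec, dotProduct, ← Finset.add_sum_erase univ _ (Finset.mem_univ i)]
  have h3 : ∑ l ∈ univ.erase i, jacHess A B z i l * y l =
      ∑ l ∈ univ.erase i, -(1 / (z i - z l) ^ 2) * y l := by
    apply Finset.sum_congr rfl
    intro l hl
    simp [jacHess, (Finset.ne_of_mem_erase hl).symm]
  have h4 : jacHess A B z i i = (∑ l ∈ univ.erase i, 1 / (z i - z l) ^ 2) + A / (1 - z i) ^ 2 +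
      B / (1 + z i) ^ 2 := by simp [jacHess]
  have h5 : ∑ l ∈ univ.erase i, (y i ^ 2 - y i * y l) * (1 / (z i - z l) ^ 2) =
      y i ^ 2 * (∑ l ∈ univ.erase i, 1 / (z i - z l) ^ 2) +
      y i * ∑ l ∈ univ.erase i, -(1 / (z i - z l) ^ 2) * y l := by
    rw [Finset.mul_sum, Finset.mul_sum, ← Finset.sum_add_distrib]
    apply Finset.sum_congr rfl
    intro l _
    ring
  rw [h3, h4, h5]
  ring

lemma jacHess_posDef {N : ℕ} (A B : ℝ) (hA : 0 < A) (hB : 0 < B) (z : Fin N → ℝ) (hz : z ∈ oalc N) :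
    (jacHess A B z).PosDef := by
  apply Matrix.PosDef.of_dotProduct_mulVec_pos
  · ext i j
    simp only [Matrix.conjTranspose_apply, star_trivial, jacHess, Matrix.of_apply]
    by_cases h : i = j
    · subst h; rfl
    · rw [if_neg h, if_neg (Ne.symm h)]
      congr 2; ring
  · intro y hy
    rw [star_trivial, quad_form A B z hz]
    obtain ⟨i, hi⟩ := Function.ne_iff.1 hy
    have hi' : y i ≠ 0 := hi
    apply add_pos_of_nonneg_of_pos
    · apply Finset.sum_nonneg; intro p _; positivity
    · apply Finset.sum_pos'
      · intro i _; positivity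
      · refine ⟨i, Finset.mem_univ _, ?_⟩
        have h1 := (oalc_m hz i).1
        have h2 := (oalc_p hz i).1
        have : 0 < (-y i) ^ 2 := by rw [neg_sq]; positivity
        positivity

lemma lphi_bound {N : ℕ} (A B : ℝ) (hA : 0 < A) (hB : 0 < B) (z : Fin N → ℝ) (hz : z ∈ oalc N)
    (heq : ∀ i, (∑ l ∈ univ.erase i, 1 / (z i - z l)) - A / (1 - z i) + B / (1 + z i) = 0)
    (x : Fin N → ℝ) (hx : x ∈ oalc N) :
    lphi A B x ≤ lphi A B z - (A + B) / 8 * ∑ i, (x i - z i) ^ 2 := by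
  have h1 := first_order A B z hz heq (fun i => x i - z i)
  have h2 : ∑ p ∈ prs N, Real.log (x p.2 - x p.1) ≤ ∑ p ∈ prs N, (Real.log (z p.2 - z p.1) +
      ((x p.2 - z p.2) - (x p.1 - z p.1)) / (z p.2 - z p.1)) := by
    apply Finset.sum_le_sum
    intro p hp
    have := log_strong _ _ (oalc_pair hx hp).1 (oalc_pair hx hp).2 (oalc_pair hz hp).1 (oalc_pair hz hp).2
    have e : x p.2 - x p.1 - (z p.2 - z p.1) = (x p.2 - z p.2) - (x p.1 - z p.1) := by ring
    rw [e] at this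
    have := sq_nonneg ((x p.2 - z p.2) - (x p.1 - z p.1))
    linarith
  have h3 : ∑ i, (A * Real.log (1 - x i) + B * Real.log (1 + x i)) ≤
      ∑ i, ((A * Real.log (1 - z i) + B * Real.log (1 + z i)) +
       (A * (-(x i - z i) / (1 - z i)) + B * ((x i - z i) / (1 + z i))) -
         (A + B) / 8 * (x i - z i) ^ 2) := by
    apply Finset.sum_le_sum
    intro i _
    have e1 := log_strong _ _ (oalc_m hx i).1 (oalc_m hx i).2 (oalc_m hz i).1 (oalc_m hz i).2
    have e2 := log_strong _ _ (oalc_p hx i).1 (oalc_p hx i).2 (oalc_p hz i).1 (oalc_p hz i).2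
    have e3 : 1 - x i - (1 - z i) = -(x i - z i) := by ring
    have e4 : 1 + x i - (1 + z i) = x i - z i := by ring
    rw [e3] at e1
    rw [e4] at e2
    have e1' := mul_le_mul_of_nonneg_left e1 hA.le
    have e2' := mul_le_mul_of_nonneg_left e2 hB.le
    refine (add_le_add e1' e2').trans (le_of_eq ?_)
    ring
  unfold lphi
  simp only [Finset.sum_sub_distrib, Finset.sum_add_distrib, ← Finset.mul_sum] at h1 h2 h3 ⊢
  linarith

lemma lphi_limit {N : ℕ} (A B : ℝ) (z : Fin N → ℝ) (hz : z ∈ oalc N)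
    (heq : ∀ i, (∑ l ∈ univ.erase i, 1 / (z i - z l)) - A / (1 - z i) + B / (1 + z i) = 0)
    (y : Fin N → ℝ) :
    Tendsto (fun κ : ℝ => κ * (lphi A B (z + (√κ)⁻¹ • y) - lphi A B z)) atTop
      (𝓝 (-(1/2) * (y ⬝ᵥ ((jacHess A B z).mulVec y)))) := by
  have h1 : Tendsto (fun κ : ℝ => (∑ p ∈ prs N, κ * (Real.log ((z p.2 - z p.1) + (√κ)⁻¹ * (y p.2 - y p.1)) -
      Real.log (z p.2 - z p.1) - (√κ)⁻¹ * (y p.2 - y p.1) / (z p.2 - z p.1))) +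
      ∑ i, (A * (κ * (Real.log ((1 - z i) + (√κ)⁻¹ * (-y i)) - Real.log (1 - z i) -
         (√κ)⁻¹ * (-y i) / (1 - z i))) +
        B * (κ * (Real.log ((1 + z i) + (√κ)⁻¹ * y i) - Real.log (1 + z i) -
         (√κ)⁻¹ * y i / (1 + z i))))) atTop
      (𝓝 ((∑ p ∈ prs N, (-(1/2) * ((y p.2 - y p.1) ^ 2 / (z p.2 - z p.1) ^ 2))) +
       ∑ i, (A * (-(1/2) * ((-y i) ^ 2 / (1 - z i) ^ 2)) +
         B * (-(1/2) * (y i ^ 2 / (1 + z i) ^ 2))))) := by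
    apply Tendsto.add
    · apply tendsto_finsetSum
      intro p hp
      exact log_second_order _ _ (oalc_pair hz hp).1
    · apply tendsto_finsetSum
      intro i _
      exact ((log_second_order _ _ (oalc_m hz i).1).const_mul A).add
        ((log_second_order _ _ (oalc_p hz i).1).const_mul B)
  have h2 : (∑ p ∈ prs N, (-(1/2) * ((y p.2 - y p.1) ^ 2 / (z p.2 - z p.1) ^ 2))) +
       ∑ i, (A * (-(1/2) * ((-y i) ^ 2 / (1 - z i) ^ 2)) +
         B * (-(1/2) * (y i ^ 2 / (1 + z i) ^ 2))) =
       -(1/2) * (y ⬝ᵥ ((jacHess A B z).mulVec y)) := by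
    rw [quad_form A B z hz, mul_add, Finset.mul_sum, Finset.mul_sum]
    congr 1
    apply Finset.sum_congr rfl
    intro i _
    ring
  rw [h2] at h1
  refine h1.congr ?_
  intro κ
  have h3 := first_order A B z hz heq y
  have h4 : (∑ p ∈ prs N, (√κ)⁻¹ * (y p.2 - y p.1) / (z p.2 - z p.1)) +
      ∑ i, (A * ((√κ)⁻¹ * (-y i) / (1 - z i)) + B * ((√κ)⁻¹ * y i / (1 + z i))) = 0 := by
    have := congrArg (fun t => (√κ)⁻¹ * t) h3
    simp only [mul_add, Finset.mul_sum, mul_zero] at this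
    rw [← this]
    congr 1
    · apply Finset.sum_congr rfl; intro p _; ring
    · apply Finset.sum_congr rfl; intro i _; ring
  unfold lphi
  have e1 : ∀ p : Fin N × Fin N, (z + (√κ)⁻¹ • y) p.2 - (z + (√κ)⁻¹ • y) p.1 =
      (z p.2 - z p.1) + (√κ)⁻¹ * (y p.2 - y p.1) := by intro p; simp; ring
  have e2 : ∀ i, 1 - (z + (√κ)⁻¹ • y) i = (1 - z i) + (√κ)⁻¹ * (-y i) := by intro p; simp; ring
  have e3 : ∀ i, 1 + (z + (√κ)⁻¹ • y) i = (1 + z i) + (√κ)⁻¹ * y i := by intro p; simp; ring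
  simp_rw [e1, e2, e3]
  have e4 : ∀ i, (A * (κ * (Real.log ((1 - z i) + (√κ)⁻¹ * (-y i)) - Real.log (1 - z i) -
         (√κ)⁻¹ * (-y i) / (1 - z i))) +
        B * (κ * (Real.log ((1 + z i) + (√κ)⁻¹ * y i) - Real.log (1 + z i) -
         (√κ)⁻¹ * y i / (1 + z i)))) =
      κ * ((A * Real.log ((1 - z i) + (√κ)⁻¹ * (-y i)) + B * Real.log ((1 + z i) + (√κ)⁻¹ * y i))
       - (A * Real.log (1 - z i) + B * Real.log (1 + z i)) -
        (A * ((√κ)⁻¹ * (-y i) / (1 - z i)) + B * ((√κ)⁻¹ * y i / (1 + z i)))) := by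
    intro i; ring
  simp_rw [e4]
  rw [← Finset.mul_sum, ← Finset.mul_sum]
  simp only [Finset.sum_sub_distrib]
  linear_combination (-κ) * h4

/-- The logarithm of the singular factor. -/
noncomputable def lg {N : ℕ} (x : Fin N → ℝ) : ℝ :=
  ∑ i, (-(1/2) * Real.log (1 - x i) + -(1/2) * Real.log (1 + x i))

lemma oalc_eventually {N : ℕ} (z : Fin N → ℝ) (hz : z ∈ oalc N) (y : Fin N → ℝ) :
    ∀ᶠ κ : ℝ in atTop, z + (√κ)⁻¹ • y ∈ oalc N := by
  have hs : Tendsto (fun κ : ℝ => (√κ)⁻¹) atTop (𝓝 0) :=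
    tendsto_inv_atTop_zero.comp Real.tendsto_sqrt_atTop
  have hc : ∀ i, Tendsto (fun κ : ℝ => (z + (√κ)⁻¹ • y) i) atTop (𝓝 (z i)) := by
    intro i
    simpa using (hs.mul_const (y i)).const_add (z i)
  have h1 : ∀ᶠ κ : ℝ in atTop, ∀ i j : Fin N, i < j → (z + (√κ)⁻¹ • y) i < (z + (√κ)⁻¹ • y) j := by
    rw [eventually_all]; intro i
    rw [eventually_all]; intro j
    by_cases hij : i < j
    · filter_upwards [(hc i).eventually_lt (hc j) (hz.1 hij)] with κ hκ _ using hκ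
    · filter_upwards with κ h using absurd h hij
  have h2 : ∀ᶠ κ : ℝ in atTop, ∀ i : Fin N, (z + (√κ)⁻¹ • y) i ∈ Set.Ioo (-1 : ℝ) 1 := by
    rw [eventually_all]; intro i
    exact (hc i).eventually (isOpen_Ioo.mem_nhds (hz.2 i))
  filter_upwards [h1, h2] with κ k1 k2
  exact ⟨fun i j h => k1 i j h, k2⟩

lemma lg_limit {N : ℕ} (z : Fin N → ℝ) (hz : z ∈ oalc N) (y : Fin N → ℝ) :
    Tendsto (fun κ : ℝ => lg (z + (√κ)⁻¹ • y)) atTop (𝓝 (lg z)) := by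
  have hs : Tendsto (fun κ : ℝ => (√κ)⁻¹) atTop (𝓝 0) :=
    tendsto_inv_atTop_zero.comp Real.tendsto_sqrt_atTop
  have hc : ∀ i, Tendsto (fun κ : ℝ => (z + (√κ)⁻¹ • y) i) atTop (𝓝 (z i)) := by
    intro i
    simpa using (hs.mul_const (y i)).const_add (z i)
  unfold lg
  apply tendsto_finsetSum
  intro i _
  apply Tendsto.add
  · exact (((hc i).const_sub 1).log (oalc_m hz i).1.ne').const_mul _
  · exact (((hc i).const_add 1).log (oalc_p hz i).1.ne').const_mul _

/-- The weight. -/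
noncomputable def wt {N : ℕ} (a b κ : ℝ) (x : Fin N → ℝ) : ℝ :=
  (∏ p ∈ prs N, (x p.2 - x p.1) ^ κ) *
      ∏ i, ((1 - x i) ^ (κ * (a + b) / 2 - 1 / 2) * (1 + x i) ^ (κ * b / 2 - 1 / 2))

lemma wt_eq {N : ℕ} (a b κ : ℝ) (x : Fin N → ℝ) (hx : x ∈ oalc N) :
    wt a b κ x = Real.exp (κ * lphi ((a + b) / 2) (b / 2) x + lg x) := by
  unfold wt lphi lg
  rw [mul_add κ (∑ p ∈ prs N, Real.log (x p.2 - x p.1)), add_assoc, Finset.mul_sum, Finset.mul_sum, ← Finset.sum_add_distrib, Real.exp_add,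
    Real.exp_sum, Real.exp_sum]
  congr 1
  · apply Finset.prod_congr rfl
    intro p hp
    rw [Real.rpow_def_of_pos (oalc_pair hx hp).1, mul_comm]
  · apply Finset.prod_congr rfl
    intro i _
    rw [Real.rpow_def_of_pos (oalc_m hx i).1, Real.rpow_def_of_pos (oalc_p hx i).1, ← Real.exp_add]
    congr 1
    ring

lemma wt_zero {N : ℕ} (a b κ : ℝ) (ha : 0 ≤ a) (hb : 0 < b) (hκ : 1 / b < κ) (x : Fin N → ℝ)
    (hx : Monotone x ∧ ∀ i, x i ∈ Set.Icc (-1 : ℝ) 1) (hx' : x ∉ oalc N) : wt a b κ x = 0 := by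
  have hκ0 : 0 < κ := lt_trans (by positivity) hκ
  have h1 : 1 < κ * b := by rwa [div_lt_iff₀ hb] at hκ
  have h2 : 0 ≤ κ * a := by positivity
  unfold wt
  by_cases hm : StrictMono x
  · have : ∃ i, x i ∉ Set.Ioo (-1 : ℝ) 1 := by
      by_contra hcon
      push Not at hcon
      exact hx' ⟨hm, hcon⟩
    obtain ⟨i, hi⟩ := this
    have hi2 := hx.2 i
    apply mul_eq_zero_of_right
    apply Finset.prod_eq_zero (Finset.mem_univ i)
    rcases hi2.1.eq_or_lt with h | h
    · apply mul_eq_zero_of_right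
      rw [← h, add_neg_cancel, Real.zero_rpow]
      linarith
    · have h3 : x i = 1 := by
        by_contra hne
        exact hi ⟨h, lt_of_le_of_ne hi2.2 hne⟩
      apply mul_eq_zero_of_left
      rw [h3, sub_self, Real.zero_rpow]
      linarith
  · have : ∃ i j, i < j ∧ ¬ x i < x j := by
      by_contra hcon
      push Not at hcon
      exact hm (fun i j h => hcon i j h)
    obtain ⟨i, j, hij, h⟩ := this
    apply mul_eq_zero_of_left
    apply Finset.prod_eq_zero (i := (i, j)) ((mem_prs _).2 hij)
    have : x j - x i = 0 := by linarith [hx.1 hij.le]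
    simp only [this]
    exact Real.zero_rpow hκ0.ne'

lemma log_le_one' {t : ℝ} (h : 0 < t ∧ t ≤ 2) : Real.log t ≤ 1 := by
  linarith [Real.log_le_sub_one_of_pos h.1, h.2]

lemma base_bound {N : ℕ} (a b : ℝ) (ha : 0 ≤ a) (hb : 0 < b) (x : Fin N → ℝ) (hx : x ∈ oalc N) :
    1 / b * lphi ((a + b) / 2) (b / 2) x + lg x ≤
      (∑ p ∈ prs N, 1 / b) + ∑ _i : Fin N, a / (2 * b) := by
  unfold lphi lg
  rw [mul_add, add_assoc, Finset.mul_sum, Finset.mul_sum, ← Finset.sum_add_distrib]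
  apply add_le_add
  · apply Finset.sum_le_sum
    intro p hp
    have := mul_le_mul_of_nonneg_left (log_le_one' (oalc_pair hx hp)) (by positivity : 0 ≤ 1 / b)
    linarith
  · apply Finset.sum_le_sum
    intro i _
    have := mul_le_mul_of_nonneg_left (log_le_one' (oalc_m hx i)) (by positivity : 0 ≤ a / (2 * b))
    rw [mul_one] at this
    refine le_trans (le_of_eq ?_) this
    field_simp
    ring

lemma alcove_measurable (N : ℕ) :
    MeasurableSet {x : Fin N → ℝ | Monotone x ∧ ∀ i, x i ∈ Set.Icc (-1 : ℝ) 1} := by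
  apply IsClosed.measurableSet
  have : {x : Fin N → ℝ | Monotone x ∧ ∀ i, x i ∈ Set.Icc (-1 : ℝ) 1} =
      (⋂ i, ⋂ j, ⋂ (_ : i ≤ j), {x : Fin N → ℝ | x i ≤ x j}) ∩
      ⋂ i, {x : Fin N → ℝ | x i ∈ Set.Icc (-1 : ℝ) 1} := by
    ext x; simp [Monotone]
  rw [this]
  apply IsClosed.inter
  · refine isClosed_iInter fun i => isClosed_iInter fun j => isClosed_iInter fun _ => ?_
    exact isClosed_le (continuous_apply i) (continuous_apply j)
  · refine isClosed_iInter fun i => ?_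
    exact isClosed_Icc.preimage (continuous_apply i)

lemma wt_measurable {N : ℕ} (a b κ : ℝ) : Measurable (wt (N := N) a b κ) := by
  unfold wt
  fun_prop

lemma jac_laplace {N : ℕ} (a b : ℝ) (ha : 0 ≤ a) (hb : 0 < b) (z : Fin N → ℝ) (hz : z ∈ oalc N)
    (heq : ∀ i, (∑ l ∈ univ.erase i, 1 / (z i - z l)) - (a + b) / 2 / (1 - z i) +
      b / 2 / (1 + z i) = 0) :
    Tendsto (fun κ : ℝ => κ ^ ((N : ℝ) / 2) *
      ((∫ x in {x : Fin N → ℝ | Monotone x ∧ ∀ i, x i ∈ Set.Icc (-1 : ℝ) 1}, wt a b κ x) *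
        Real.exp (-(κ * lphi ((a + b) / 2) (b / 2) z)))) atTop
      (𝓝 (Real.exp (lg z) * ((2 * π) ^ ((N : ℝ) / 2) /
        √(jacHess ((a + b) / 2) (b / 2) z).det))) := by
  set S := {x : Fin N → ℝ | Monotone x ∧ ∀ i, x i ∈ Set.Icc (-1 : ℝ) 1} with hS
  set A := (a + b) / 2 with hAdef
  set B := b / 2 with hBdef
  have hA : 0 < A := by rw [hAdef]; linarith
  have hB : 0 < B := by rw [hBdef]; linarith
  have hsub : oalc N ⊆ S := fun x hx => ⟨hx.1.monotone, fun i => Set.Ioo_subset_Icc_self (hx.2 i)⟩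
  have hSm : MeasurableSet S := alcove_measurable N
  set M := (∑ p ∈ prs N, 1 / b) + ∑ _i : Fin N, a / (2 * b) with hM
  have key := laplace_lemma (jacHess A B z) (jacHess_posDef A B hA hB z hz) z
    (fun κ x => S.indicator (wt a b κ) x * Real.exp (-(κ * lphi A B z)))
    (fun κ => ((wt_measurable a b κ).indicator hSm).mul_const _)
    (Real.exp (M - 1 / b * lphi A B z)) ((A + B) / 16) (Real.exp (lg z)) (by positivity) ?_ ?_
  · refine key.congr ?_
    intro κ
    rw [integral_mul_const, integral_indicator hSm]
  · filter_upwards [eventually_gt_atTop (2 / b)] with κ hκ x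
    have hb1 : 0 < 1 / b := by positivity
    have hκ1 : 2 * (1 / b) < κ := by rw [mul_one_div]; exact hκ
    have hκ2 : 1 / b < κ := by linarith
    by_cases hx : x ∈ oalc N
    · rw [Set.indicator_of_mem (hsub hx), wt_eq a b κ x hx, ← Real.exp_add, Real.abs_exp,
        ← Real.exp_add, Real.exp_le_exp]
      have e1 := base_bound a b ha hb x hx
      have e2 := lphi_bound A B hA hB z hz heq x hx
      have e3 : 0 ≤ ∑ i, (x i - z i) ^ 2 := Finset.sum_nonneg fun i _ => sq_nonneg _
      rw [← hM] at e1
      have e4 : (κ - 1 / b) * (lphi A B x - lphi A B z) ≤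
          (κ - 1 / b) * (-((A + B) / 8 * ∑ i, (x i - z i) ^ 2)) :=
        mul_le_mul_of_nonneg_left (by linarith) (by linarith)
      have e5 : κ / 2 * ((A + B) / 8 * ∑ i, (x i - z i) ^ 2) ≤
          (κ - 1 / b) * ((A + B) / 8 * ∑ i, (x i - z i) ^ 2) :=
        mul_le_mul_of_nonneg_right (by linarith) (by positivity)
      rw [← hAdef, ← hBdef] at *
      nlinarith [e1, e4, e5]
    · have : S.indicator (wt a b κ) x = 0 := by
        by_cases hxS : x ∈ S
        · rw [Set.indicator_of_mem hxS]
          exact wt_zero a b κ ha hb hκ2 x hxS hx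
        · exact Set.indicator_of_notMem hxS _
      rw [this, zero_mul, abs_zero]
      positivity
  · intro y
    have h1 := ((lphi_limit A B z hz heq y).add (lg_limit z hz y)).rexp
    rw [add_comm, Real.exp_add] at h1
    refine h1.congr' ?_
    filter_upwards [oalc_eventually z hz y] with κ hκ
    rw [Set.indicator_of_mem (hsub hκ), wt_eq a b κ _ hκ, ← Real.exp_add]
    congr 1
    ring

lemma phi_eq {N : ℕ} (a b : ℝ) (x : Fin N → ℝ) (hx : x ∈ oalc N) :
    (∏ p ∈ prs N, (x p.2 - x p.1)) * ∏ j, ((1 - x j) ^ ((a + b) / 2) * (1 + x j) ^ (b / 2)) =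
      Real.exp (lphi ((a + b) / 2) (b / 2) x) := by
  unfold lphi
  rw [Real.exp_add, Real.exp_sum, Real.exp_sum]
  congr 1
  · apply Finset.prod_congr rfl
    intro p hp
    rw [Real.exp_log (oalc_pair hx hp).1]
  · apply Finset.prod_congr rfl
    intro i _
    rw [Real.rpow_def_of_pos (oalc_m hx i).1, Real.rpow_def_of_pos (oalc_p hx i).1, ← Real.exp_add]
    congr 1
    ring

lemma lg_eq {N : ℕ} (z : Fin N → ℝ) (hz : z ∈ oalc N) :
    ∏ j, (1 - z j ^ 2) ^ (-(1 : ℝ) / 2) = Real.exp (lg z) := by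
  unfold lg
  rw [Real.exp_sum]
  apply Finset.prod_congr rfl
  intro i _
  have h1 := (oalc_m hz i).1
  have h2 := (oalc_p hz i).1
  have : 1 - z i ^ 2 = (1 - z i) * (1 + z i) := by ring
  rw [this, Real.rpow_def_of_pos (mul_pos h1 h2), Real.log_mul h1.ne' h2.ne']
  congr 1
  ring

lemma final_const (N : ℕ) (d n Q X Y Z : ℝ) (hn : 0 < n) (hQ : 0 < Q) (hX : 0 < X) (hY : 0 < Y)
    (hZ : 0 < Z) (h1 : 2 ^ N * Z * d = n * Q) (h2 : Z * Q ^ 2 = 4 ^ N * (X * Y)) :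
    √d / (2 * π) ^ ((N : ℝ) / 2) =
      √n * Q ^ ((3 : ℝ) / 2) / (2 ^ (2 * N) * π ^ ((N : ℝ) / 2) * √(X * Y)) := by
  have hXY : 0 < X * Y := mul_pos hX hY
  have hpi := Real.pi_pos
  have hd : d = n * Q ^ 3 / (8 ^ N * (X * Y)) := by
    have e8 : (8:ℝ) ^ N = 2 ^ N * 4 ^ N := by rw [← mul_pow]; norm_num
    rw [eq_div_iff (by positivity), e8]
    linear_combination (-d * 2 ^ N) * h2 + Q ^ 2 * h1
  have hQ3 : √(Q ^ 3) = Q ^ ((3 : ℝ) / 2) := by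
    rw [Real.sqrt_eq_rpow, ← Real.rpow_natCast, ← Real.rpow_mul hQ.le]
    norm_num
  have h8 : √((8:ℝ) ^ N) * 2 ^ ((N : ℝ) / 2) = 2 ^ (2 * N) := by
    have : (8:ℝ) ^ N = (2:ℝ) ^ ((3:ℝ) * N) := by
      rw [Real.rpow_mul (by norm_num), Real.rpow_natCast]; norm_num
    rw [this, Real.sqrt_eq_rpow, ← Real.rpow_mul (by norm_num), ← Real.rpow_add (by norm_num),
      ← Real.rpow_natCast]
    congr 1
    push_cast
    ring
  rw [hd, Real.sqrt_div' _ (by positivity), Real.sqrt_mul' _ (by positivity), hQ3,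
    Real.sqrt_mul' _ hXY.le, Real.mul_rpow (by norm_num) hpi.le, ← h8, div_div]
  congr 1
  ring

theorem jacobi_normalization_limit
    (N : ℕ) (hN : 1 ≤ N) (a b : ℝ) (ha : 0 ≤ a) (hb : 0 < b)
    (α β : ℝ) (hα : α = a + b - 1) (hβ : β = b - 1)
    (P : Polynomial ℝ) (hPdeg : P.natDegree = N)
    (hPorth : ∀ Q : Polynomial ℝ, Q.natDegree < N →
      ∫ x in Set.Ioo (-1 : ℝ) 1,
        P.eval x * Q.eval x * (1 - x) ^ α * (1 + x) ^ β = 0)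
    (hPone : P.eval 1 = (∏ j ∈ Finset.range N, (α + 1 + j)) / (N.factorial : ℝ))
    (z : Fin N → ℝ) (hzmono : StrictMono z)
    (hzroot : ∀ i, P.eval (z i) = 0)
    (hzmem : ∀ i, z i ∈ Set.Ioo (-1 : ℝ) 1)
    (A : Set (Fin N → ℝ))
    (hA : A = {x | Monotone x ∧ ∀ i, x i ∈ Set.Icc (-1 : ℝ) 1})
    (φ : (Fin N → ℝ) → ℝ)
    (hφ : φ = fun x =>
      (∏ p ∈ Finset.univ.filter (fun p : Fin N × Fin N => p.1 < p.2), (x p.2 - x p.1)) *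
      ∏ j, ((1 - x j) ^ ((a + b) / 2) * (1 + x j) ^ (b / 2)))
    (w : ℝ → (Fin N → ℝ) → ℝ)
    (hw : w = fun κ x =>
      (∏ p ∈ Finset.univ.filter (fun p : Fin N × Fin N => p.1 < p.2), (x p.2 - x p.1) ^ κ) *
      ∏ i, ((1 - x i) ^ (κ * (a + b) / 2 - 1 / 2) * (1 + x i) ^ (κ * b / 2 - 1 / 2)))
    : Tendsto (fun κ : ℝ =>
        (∫ x in A, w κ x)⁻¹ * κ ^ (-(N : ℝ) / 2) * φ z ^ κ *
          ∏ j, (1 - z j ^ 2) ^ (-(1 : ℝ) / 2))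
      atTop
      (𝓝 (Real.sqrt (N.factorial : ℝ) *
        (∏ j ∈ Finset.range N, ((N : ℝ) + α + β + 1 + j)) ^ ((3 : ℝ) / 2) /
        (2 ^ (2 * N) * π ^ ((N : ℝ) / 2) *
          Real.sqrt ((∏ j ∈ Finset.range N, (α + 1 + j)) *
            (∏ j ∈ Finset.range N, (β + 1 + j)))))) := by
  have hα1 : -1 < α := by linarith
  have hβ1 : -1 < β := by linarith
  have hzo : z ∈ oalc N := ⟨hzmono, hzmem⟩
  -- factorization of `P`
  have hP0 : P ≠ 0 := by rintro rfl; simp at hPdeg; omega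
  have hlc : P.leadingCoeff ≠ 0 := Polynomial.leadingCoeff_ne_zero.2 hP0
  set p : Polynomial ℝ := ∏ l, (Polynomial.X - Polynomial.C (z l)) with hp
  have hpm : p.Monic := Polynomial.monic_prod_of_monic _ _ fun l _ => Polynomial.monic_X_sub_C _
  have hpd : p.natDegree = N := by
    rw [hp, Polynomial.natDegree_prod_of_monic _ _ (fun l _ => Polynomial.monic_X_sub_C _)]
    simp
  have hfac : P = Polynomial.C P.leadingCoeff * p := by
    have hdvd : p ∣ P := by
      apply Finset.prod_dvd_of_coprime
      · intro i _ j _ hij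
        exact Polynomial.isCoprime_X_sub_C_of_isUnit_sub
          (sub_ne_zero.2 (fun h => hij (hzmono.injective h))).isUnit
      · intro i _
        exact Polynomial.dvd_iff_isRoot.2 (hzroot i)
    exact Polynomial.eq_leadingCoeff_mul_of_monic_of_dvd_of_natDegree_le hpm hdvd (by omega)
  have hode := jac_ode N hN α β hα1 hβ1 P hPdeg hPorth
  have hode' : jacL α β p + Polynomial.C (N * (N + α + β + 1)) * p = 0 := by
    have hC : Polynomial.C P.leadingCoeff ≠ 0 := Polynomial.C_ne_zero.2 hlc
    apply mul_left_cancel₀ hC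
    rw [mul_zero, ← hode]
    conv_rhs => rw [hfac]
    unfold jacL
    simp only [Polynomial.derivative_C_mul]
    ring
  have hequil := jac_equil z hzmono.injective α β _ hode'
  have hdet := jac_det z hzmono.injective α β _ hode' hzmem
  have hAe : (α + 1) / 2 = (a + b) / 2 := by rw [hα]; ring
  have hBe : (β + 1) / 2 = b / 2 := by rw [hβ]; ring
  rw [hAe, hBe] at hdet
  have heq : ∀ i, (∑ l ∈ univ.erase i, 1 / (z i - z l)) - (a + b) / 2 / (1 - z i) +
      b / 2 / (1 + z i) = 0 := by
    intro i
    have h1 := (oalc_m hzo i).1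
    have h2 := (oalc_p hzo i).1
    have h3 := hequil i
    rw [← hAe, ← hBe]
    generalize (∑ l ∈ univ.erase i, 1 / (z i - z l)) = S at *
    field_simp
    linear_combination h3
  have hlap := jac_laplace a b ha hb z hzo heq
  have hpos := (jacHess_posDef ((a + b) / 2) (b / 2) (by linarith) (by linarith) z hzo).det_pos
  -- constants
  have hprod : ∀ c d : ℝ, 0 < c → ∏ j ∈ Finset.range N, (c + j) > 0 := by
    intro c _ hc
    exact Finset.prod_pos fun j _ => by positivity
  have hX : 0 < ∏ j ∈ Finset.range N, (α + 1 + (j : ℝ)) := hprod _ 0 (by linarith)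
  have hY : 0 < ∏ j ∈ Finset.range N, (β + 1 + (j : ℝ)) := hprod _ 0 (by linarith)
  have hN1 : (1 : ℝ) ≤ N := by exact_mod_cast hN
  have hQ : 0 < ∏ j ∈ Finset.range N, ((N : ℝ) + α + β + 1 + j) := hprod _ 0 (by linarith)
  have hZ : 0 < ∏ i, (1 - z i ^ 2) := by
    apply Finset.prod_pos
    intro i _
    have h1 := (oalc_m hzo i).1
    have h2 := (oalc_p hzo i).1
    nlinarith
  have h1 : 2 ^ N * (∏ i, (1 - z i ^ 2)) * (jacHess ((a + b) / 2) (b / 2) z).det =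
      (N.factorial : ℝ) * ∏ j ∈ Finset.range N, ((N : ℝ) + α + β + 1 + j) := by
    rw [hdet]
    have := prod_eigen N (α + β + 1)
    simp only [← add_assoc] at this
    exact this
  have h2 : (∏ i, (1 - z i ^ 2)) * (∏ j ∈ Finset.range N, ((N : ℝ) + α + β + 1 + j)) ^ 2 =
      4 ^ N * ((∏ j ∈ Finset.range N, (α + 1 + (j : ℝ))) *
        (∏ j ∈ Finset.range N, (β + 1 + (j : ℝ)))) := by
    obtain ⟨v1, v2⟩ := jac_values N α β hα1 hβ1 p hpd hode'
    have hc : p.coeff N = 1 := by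
      have := hpm.coeff_natDegree
      rwa [hpd] at this
    rw [hc, one_mul] at v1 v2
    have e1 : p.eval 1 = ∏ i, (1 - z i) := by simp [hp, Polynomial.eval_prod]
    have e2 : p.eval (-1) = (-1) ^ N * ∏ i, (1 + z i) := by
      rw [hp, Polynomial.eval_prod]
      have : ∀ i, (Polynomial.X - Polynomial.C (z i)).eval (-1) = (-1) * (1 + z i) := by
        intro i; simp; ring
      simp_rw [this]
      rw [Finset.prod_mul_distrib]
      simp
    have e3 : ∏ i, (1 - z i ^ 2) = (∏ i, (1 - z i)) * ∏ i, (1 + z i) := by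
      rw [← Finset.prod_mul_distrib]
      apply Finset.prod_congr rfl
      intro i _
      ring
    have e4 : ((-2 : ℝ)) ^ N = (-1) ^ N * 2 ^ N := by rw [← mul_pow]; norm_num
    have e5 : ((-1 : ℝ)) ^ N * (-1) ^ N = 1 := by rw [← mul_pow]; norm_num
    have e6 : (4 : ℝ) ^ N = 2 ^ N * 2 ^ N := by rw [← mul_pow]; norm_num
    rw [e1] at v1
    rw [e2, e4] at v2
    have v2' : (∏ i, (1 + z i)) * (∏ j ∈ Finset.range N, ((N : ℝ) + α + β + 1 + j)) =
        2 ^ N * (∏ j ∈ Finset.range N, (β + 1 + (j : ℝ))) := by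
      have hne : ((-1 : ℝ)) ^ N ≠ 0 := by intro h; rw [h] at e5; simp at e5
      apply mul_left_cancel₀ hne
      linear_combination v2
    rw [e3, e6]
    calc _ = ((∏ i, (1 - z i)) * (∏ j ∈ Finset.range N, ((N : ℝ) + α + β + 1 + j))) *
          ((∏ i, (1 + z i)) * (∏ j ∈ Finset.range N, ((N : ℝ) + α + β + 1 + j))) := by ring
      _ = _ := by rw [v1, v2']; ring
  rw [← final_const N _ _ _ _ _ _ (by positivity) hQ hX hY hZ h1 h2]
  have hphi : φ z = Real.exp (lphi ((a + b) / 2) (b / 2) z) := by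
    rw [hφ]; exact phi_eq a b z hzo
  have hww : w = fun κ x => wt a b κ x := by rw [hw]; rfl
  have hfin := (hlap.inv₀ (by positivity)).const_mul (Real.exp (lg z))
  have hlimeq : Real.exp (lg z) * (Real.exp (lg z) * ((2 * π) ^ ((N : ℝ) / 2) /
        √(jacHess ((a + b) / 2) (b / 2) z).det))⁻¹ =
      √(jacHess ((a + b) / 2) (b / 2) z).det / (2 * π) ^ ((N : ℝ) / 2) := by
    have := Real.exp_pos (lg z)
    field_simp
  rw [hlimeq] at hfin
  refine hfin.congr' ?_
  filter_upwards [eventually_gt_atTop 0] with κ hκ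
  rw [hphi, lg_eq z hzo, hww, hA, ← Real.exp_mul, mul_inv, mul_inv, ← Real.exp_neg, neg_neg,
    neg_div, Real.rpow_neg hκ.le, mul_comm κ]
  ring
end
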